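/- arXiv:math/0303318 — 7 statements merged into one kernel-verified Lean document; each statement's English description precedes it below -/
import Mathlib

section
/- Let A be a unital C*-algebra carrying a faithful tracial state τ, and let p, q be positive real numbers with 1/p + 1/q = 1. Then for all positive elements a, b ∈ A, τ(|ab|) ≤ p⁻¹ τ(aᵖ) + q⁻¹ τ(b^q). -/
/-!
For invertible `a` and `b` write `a = e^{X/p}`, `b = e^{Y/q}` and `|ab| = u ab` with `u` unitary.
The entire function `F z = τ (u e^{zX} e^{(1-z)Y})` equals `τ |ab|` at `z = 1/p`. The trace property
moves the unitaries `e^{itX}` and `e^{-itY}`, `t = Im z`, next to `u`, so `|F|` is at most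
`τ (e^Y) = τ (b^q)` on `Re z = 0` and at most `τ (e^X) = τ (a^p)` on `Re z = 1`. The three lines
theorem gives Hölder's inequality `τ |ab| ≤ τ (a^p)^{1/p} τ (b^q)^{1/q}`, which extends to all
positive `a` and `b` by continuity; the scalar Young inequality concludes.
-/

open scoped ComplexOrder

/-- The absolute value `|z| = (z*z)^(1/2)` of an element of a C*-algebra. -/
noncomputable def CStarAbs {A : Type*} [CStarAlgebra A] [PartialOrder A] [StarOrderedRing A]
    (z : A) : A := CFC.sqrt (star z * z)

open NormedSpace (exp)
open Filter Topology

section Functional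

lemma ofReal_re_map_of_nonneg {E : Type*} [AddCommGroup E] [PartialOrder E] [Module ℂ E]
    (τ : E →ₚ[ℂ] ℂ) {c : E} (hc : 0 ≤ c) : ((τ c).re : ℂ) = τ c :=
  (Complex.eq_re_of_ofReal_le (r := 0) (by simpa using τ.map_nonneg hc)).symm

lemma re_map_nonneg {E : Type*} [AddCommGroup E] [PartialOrder E] [Module ℂ E]
    (τ : E →ₚ[ℂ] ℂ) {c : E} (hc : 0 ≤ c) : 0 ≤ (τ c).re :=
  (Complex.le_def.1 (τ.map_nonneg hc)).1

variable {A : Type*} [NonUnitalCStarAlgebra A] [PartialOrder A] [StarOrderedRing A]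

lemma norm_map_star_mul_mul_le (τ : A →ₚ[ℂ] ℂ) (s x : A) :
    ‖τ (star s * (x * s))‖ ≤ ‖x‖ * (τ (star s * s)).re := by
  let v := τ.toPreGNS s
  have norm_v_sq : ‖v‖ * ‖v‖ = (τ (star s * s)).re := by
    rw [← sq]
    exact_mod_cast congrArg Complex.re (τ.preGNS_norm_sq v)
  calc ‖τ (star s * (x * s))‖ = ‖inner ℂ v (τ.leftMulMapPreGNS x v)‖ := rfl
    _ ≤ ‖v‖ * ‖τ.leftMulMapPreGNS x v‖ := norm_inner_le_norm _ _
    _ ≤ ‖v‖ * (‖x‖ * ‖v‖) := by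
      gcongr
      exact (τ.leftMulMapPreGNS x).le_of_opNorm_le
        (LinearMap.mkContinuous_norm_le _ (norm_nonneg x) _) v
    _ = ‖x‖ * (τ (star s * s)).re := by rw [← norm_v_sq]; ring

lemma norm_trace_mul_le (τ : A →ₚ[ℂ] ℂ) (hτ : ∀ x y, τ (x * y) = τ (y * x)) (x : A) {c : A}
    (hc : 0 ≤ c) : ‖τ (x * c)‖ ≤ ‖x‖ * (τ c).re := by
  have star_sqrt : star (CFC.sqrt c) = CFC.sqrt c := (CFC.sqrt_nonneg c).star_eq
  have sqrt_mul_sqrt : CFC.sqrt c * CFC.sqrt c = c := CFC.sqrt_mul_sqrt_self c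
  have trace_eq : τ (x * c) = τ (star (CFC.sqrt c) * (x * CFC.sqrt c)) := by
    rw [star_sqrt, hτ (CFC.sqrt c), mul_assoc, sqrt_mul_sqrt]
  rw [trace_eq]
  simpa only [star_sqrt, sqrt_mul_sqrt] using norm_map_star_mul_mul_le τ (CFC.sqrt c) x

end Functional

section Exponential

lemma exp_add_smul {𝕜 B : Type*} [RCLike 𝕜] [NormedRing B] [NormedAlgebra 𝕜 B] [CompleteSpace B]
    (s t : 𝕜) (X : B) : exp ((s + t) • X) = exp (s • X) * exp (t • X) := by
  let +nondep : NormedAlgebra ℚ B := .restrictScalars ℚ 𝕜 B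
  rw [add_smul]
  exact NormedSpace.exp_add_of_commute (((Commute.refl X).smul_left s).smul_right t)

lemma exp_mul_I_smul_mem_unitary {B : Type*} [NormedRing B] [NormedAlgebra ℂ B] [StarRing B]
    [ContinuousStar B] [CompleteSpace B] [StarModule ℂ B] {X : B} (hX : IsSelfAdjoint X) (t : ℝ) :
    exp ((t * Complex.I) • X) ∈ unitary B := by
  have htX : IsSelfAdjoint (t • X) := (IsSelfAdjoint.all t).smul hX
  simpa [mul_comm (t : ℂ), mul_smul] using (selfAdjoint.expUnitary ⟨t • X, htX⟩).2

lemma exp_rpow {A : Type*} [CStarAlgebra A] [PartialOrder A] [StarOrderedRing A] {X : A}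
    (hX : IsSelfAdjoint X) (p : ℝ) : exp X ^ p = exp (p • X) := by
  rw [CFC.rpow_eq_cfc_real hX.exp_nonneg, ← CFC.real_exp_eq_normedSpace_exp hX,
    ← CFC.real_exp_eq_normedSpace_exp ((IsSelfAdjoint.all p).smul hX),
    ← cfc_comp' (· ^ p) Real.exp X (by fun_prop (disch := simp [Real.exp_ne_zero])),
    ← cfc_comp_smul p Real.exp X]
  simp [← Real.exp_mul, mul_comm]

end Exponential

section Positive

variable {A : Type*} [CStarAlgebra A] [PartialOrder A] [StarOrderedRing A]

lemma exists_mem_unitary_mul_eq_abs {z : A} (hz : IsUnit z) :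
    ∃ u ∈ unitary A, u * z = CFC.abs z := by
  obtain ⟨m, hm⟩ : IsUnit (CFC.abs z) :=
    (isUnit_pow_iff two_ne_zero).1 (CFC.abs_sq z ▸ hz.star.mul hz)
  have star_m : star m = m := Units.ext (by rw [Units.coe_star, hm, (CFC.abs_nonneg z).star_eq])
  have star_mul_self : star z * z = (m * m : A) := by rw [hm, CFC.abs_mul_abs]
  refine ⟨↑m⁻¹ * star z, (m⁻¹.isUnit.mul hz.star).mem_unitary_of_mul_star_self ?_, ?_⟩
  · calc ↑m⁻¹ * star z * star (↑m⁻¹ * star z)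
        = ↑m⁻¹ * (star z * z) * ↑m⁻¹ := by
          rw [star_mul, star_star, ← Units.coe_star, star_inv, star_m]
          simp only [mul_assoc]
      _ = 1 := by simp [star_mul_self]
  · rw [mul_assoc, star_mul_self, Units.inv_mul_cancel_left, hm]

lemma continuousOn_rpow_nonneg {p : ℝ} (hp : 0 < p) :
    ContinuousOn (fun a : A ↦ a ^ p) {a | 0 ≤ a} := by
  lift p to NNReal using hp.le
  simpa only [CFC.nnrpow_eq_rpow (NNReal.coe_pos.1 hp)] using CFC.continuousOn_nnrpow (A := A) p

lemma mem_closure_isStrictlyPositive {a : A} (ha : 0 ≤ a) :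
    a ∈ closure {x : A | IsStrictlyPositive x} := by
  have shift_tendsto : Tendsto (fun ε : ℝ ↦ a + algebraMap ℝ A ε) (𝓝[>] 0) (𝓝 a) :=
    Continuous.tendsto' (by fun_prop) 0 a (by simp) |>.mono_left nhdsWithin_le_nhds
  refine mem_closure_of_tendsto shift_tendsto ?_
  filter_upwards [self_mem_nhdsWithin] with ε hε
  exact (isStrictlyPositive_algebraMap hε).nonneg_add ha

end Positive

section Interpolation

variable {A : Type*} [CStarAlgebra A] [PartialOrder A]

/-- The function `z ↦ τ (w e^{zX} e^{(1-z)Y})` interpolating between `τ (w e^Y)` at `z = 0` and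
`τ (w e^X)` at `z = 1`, to which the three lines theorem is applied. -/
noncomputable def expInterp (τ : A →ₚ[ℂ] ℂ) (w X Y : A) (z : ℂ) : ℂ :=
  τ (w * (exp (z • X) * exp ((1 - z) • Y)))

@[simp]
lemma expInterp_zero (τ : A →ₚ[ℂ] ℂ) (w X Y : A) : expInterp τ w X Y 0 = τ (w * exp Y) := by
  simp [expInterp]

@[simp]
lemma expInterp_one (τ : A →ₚ[ℂ] ℂ) (w X Y : A) : expInterp τ w X Y 1 = τ (w * exp X) := by
  simp [expInterp]

lemma exists_expInterp_eq_re (τ : A →ₚ[ℂ] ℂ) (hτ : ∀ x y, τ (x * y) = τ (y * x)) (w : A) {X Y : A}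
    (hX : IsSelfAdjoint X) (hY : IsSelfAdjoint Y) (z : ℂ) :
    ∃ w' : A, ‖w'‖ = ‖w‖ ∧ expInterp τ w X Y z = expInterp τ w' X Y z.re := by
  let u := exp ((z.im * Complex.I) • X)
  let v := exp (((-z.im : ℝ) * Complex.I) • Y)
  have exp_X : exp (z • X) = u * exp ((z.re : ℂ) • X) := by
    rw [← exp_add_smul, add_comm, Complex.re_add_im]
  have exp_Y : exp ((1 - z) • Y) = exp ((1 - z.re : ℂ) • Y) * v := by
    rw [← exp_add_smul]
    congr 2
    apply Complex.ext <;> simp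
  refine ⟨v * w * u, ?_, ?_⟩
  · rw [CStarRing.norm_mul_mem_unitary _ (exp_mul_I_smul_mem_unitary hX _),
      CStarRing.norm_mem_unitary_mul _ (exp_mul_I_smul_mem_unitary hY _)]
  · simp only [expInterp, exp_X, exp_Y, ← mul_assoc]
    rw [hτ _ v]
    simp only [mul_assoc]

variable [StarOrderedRing A]

lemma differentiable_expInterp (τ : A →ₚ[ℂ] ℂ) (w X Y : A) :
    Differentiable ℂ (expInterp τ w X Y) := by
  have exp_smul_differentiable (Z : A) : Differentiable ℂ fun z : ℂ ↦ exp (z • Z) :=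
    fun z ↦ (hasDerivAt_exp_smul_const Z z).differentiableAt
  have exp_Y : Differentiable ℂ fun z : ℂ ↦ exp ((1 - z) • Y) :=
    (exp_smul_differentiable Y).comp (differentiable_id.const_sub 1)
  exact (⟨τ, map_continuous τ⟩ : A →L[ℂ] ℂ).differentiable.comp
    (((exp_smul_differentiable X).mul exp_Y).const_mul w)

open Complex.HadamardThreeLines in
lemma bddAbove_norm_expInterp (τ : A →ₚ[ℂ] ℂ) (hτ : ∀ x y, τ (x * y) = τ (y * x)) (w : A)
    {X Y : A} (hX : IsSelfAdjoint X) (hY : IsSelfAdjoint Y) :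
    BddAbove ((norm ∘ expInterp τ w X Y) '' verticalClosedStrip 0 1) := by
  obtain ⟨C, hC⟩ := τ.exists_norm_apply_le
  have exp_mul_exp_continuous :
      Continuous fun t : ℝ ↦ exp ((t : ℂ) • X) * exp ((1 - t : ℂ) • Y) := by
    let +nondep : NormedAlgebra ℚ A := .restrictScalars ℚ ℂ A
    fun_prop
  obtain ⟨D, hD⟩ := isCompact_Icc.exists_bound_of_continuousOn
    (exp_mul_exp_continuous.continuousOn (s := Set.Icc 0 1))
  refine ⟨C * (‖w‖ * D), ?_⟩
  rintro _ ⟨z, hz, rfl⟩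
  obtain ⟨w', norm_w', interp_eq⟩ := exists_expInterp_eq_re τ hτ w hX hY z
  calc ‖expInterp τ w X Y z‖
      ≤ C * ‖w' * (exp ((z.re : ℂ) • X) * exp ((1 - z.re : ℂ) • Y))‖ := interp_eq ▸ hC _
    _ ≤ C * (‖w'‖ * D) := by
      gcongr
      exact norm_mul_le_of_le le_rfl (hD z.re hz)
    _ = C * (‖w‖ * D) := by rw [norm_w']

theorem norm_expInterp_le (τ : A →ₚ[ℂ] ℂ) (hτ : ∀ x y, τ (x * y) = τ (y * x)) (w : A) {X Y : A}
    (hX : IsSelfAdjoint X) (hY : IsSelfAdjoint Y) {θ : ℝ} (hθ : θ ∈ Set.Icc 0 1) :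
    ‖expInterp τ w X Y θ‖ ≤ ‖w‖ * ((τ (exp X)).re ^ θ * (τ (exp Y)).re ^ (1 - θ)) := by
  have bound_re_zero (z : ℂ) (hz : z.re = 0) :
      ‖expInterp τ w X Y z‖ ≤ ‖w‖ * (τ (exp Y)).re := by
    obtain ⟨w', norm_w', interp_eq⟩ := exists_expInterp_eq_re τ hτ w hX hY z
    simpa [interp_eq, hz, norm_w'] using norm_trace_mul_le τ hτ w' hY.exp_nonneg
  have bound_re_one (z : ℂ) (hz : z.re = 1) :
      ‖expInterp τ w X Y z‖ ≤ ‖w‖ * (τ (exp X)).re := by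
    obtain ⟨w', norm_w', interp_eq⟩ := exists_expInterp_eq_re τ hτ w hX hY z
    simpa [interp_eq, hz, norm_w'] using norm_trace_mul_le τ hτ w' hX.exp_nonneg
  calc ‖expInterp τ w X Y θ‖
      ≤ (‖w‖ * (τ (exp Y)).re) ^ (1 - θ) * (‖w‖ * (τ (exp X)).re) ^ θ := by
        simpa using Complex.HadamardThreeLines.norm_le_interp_of_mem_verticalClosedStrip₀₁'
          (expInterp τ w X Y) (z := θ) hθ (differentiable_expInterp τ w X Y).diffContOnCl
          (bddAbove_norm_expInterp τ hτ w hX hY) bound_re_zero bound_re_one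
    _ = ‖w‖ ^ (1 - θ + θ) * ((τ (exp X)).re ^ θ * (τ (exp Y)).re ^ (1 - θ)) := by
        rw [Real.mul_rpow (norm_nonneg w) (re_map_nonneg τ hY.exp_nonneg),
          Real.mul_rpow (norm_nonneg w) (re_map_nonneg τ hX.exp_nonneg),
          Real.rpow_add_of_nonneg (norm_nonneg w) (sub_nonneg.2 hθ.2) hθ.1]
        ring
    _ = ‖w‖ * ((τ (exp X)).re ^ θ * (τ (exp Y)).re ^ (1 - θ)) := by simp

end Interpolation

section Holder

variable {A : Type*} [CStarAlgebra A] [PartialOrder A] [StarOrderedRing A]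

theorem norm_trace_mul_mul_le_of_isStrictlyPositive (τ : A →ₚ[ℂ] ℂ)
    (hτ : ∀ x y, τ (x * y) = τ (y * x)) {p q : ℝ} (hpq : p.HolderConjugate q) (w : A) {a b : A}
    (ha : IsStrictlyPositive a) (hb : IsStrictlyPositive b) :
    ‖τ (w * (a * b))‖ ≤ ‖w‖ * ((τ (a ^ p)).re ^ p⁻¹ * (τ (b ^ q)).re ^ q⁻¹) := by
  have exp_log_smul {c : A} (hc : IsStrictlyPositive c) (r : ℝ) :
      exp (r • CFC.log c) = c ^ r := by
    rw [← exp_rpow .log, CFC.exp_log c]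
  have interp_eq : expInterp τ w (p • CFC.log a) (q • CFC.log b) p⁻¹ = τ (w * (a * b)) := by
    have one_sub_inv : (1 - (p : ℂ)⁻¹) = ((q⁻¹ : ℝ) : ℂ) := by
      rw [← hpq.one_sub_inv]
      norm_cast
    rw [expInterp, one_sub_inv, ← Complex.ofReal_inv]
    simp only [Complex.coe_smul, inv_smul_smul₀ hpq.ne_zero, inv_smul_smul₀ hpq.symm.ne_zero,
      CFC.exp_log a, CFC.exp_log b]
  have hp_inv : p⁻¹ ∈ Set.Icc (0 : ℝ) 1 := ⟨hpq.inv_nonneg, inv_le_one_of_one_le₀ hpq.lt.le⟩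
  simpa [interp_eq, exp_log_smul ha, exp_log_smul hb, hpq.one_sub_inv] using
    norm_expInterp_le τ hτ w ((IsSelfAdjoint.all p).smul (.log (a := a)))
      ((IsSelfAdjoint.all q).smul (.log (a := b))) hp_inv

theorem trace_abs_mul_le_of_isStrictlyPositive (τ : A →ₚ[ℂ] ℂ)
    (hτ : ∀ x y, τ (x * y) = τ (y * x)) {p q : ℝ} (hpq : p.HolderConjugate q) {a b : A}
    (ha : IsStrictlyPositive a) (hb : IsStrictlyPositive b) :
    (τ (CFC.abs (a * b))).re ≤ (τ (a ^ p)).re ^ p⁻¹ * (τ (b ^ q)).re ^ q⁻¹ := by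
  obtain ⟨u, hu, abs_eq⟩ := exists_mem_unitary_mul_eq_abs (ha.isUnit.mul hb.isUnit)
  have norm_u : ‖u‖ ≤ 1 := by
    nontriviality A
    exact (CStarRing.norm_of_mem_unitary hu).le
  calc (τ (CFC.abs (a * b))).re ≤ ‖τ (u * (a * b))‖ := abs_eq ▸ Complex.re_le_norm _
    _ ≤ ‖u‖ * ((τ (a ^ p)).re ^ p⁻¹ * (τ (b ^ q)).re ^ q⁻¹) :=
      norm_trace_mul_mul_le_of_isStrictlyPositive τ hτ hpq u ha hb
    _ ≤ (τ (a ^ p)).re ^ p⁻¹ * (τ (b ^ q)).re ^ q⁻¹ :=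
      mul_le_of_le_one_left (mul_nonneg (Real.rpow_nonneg (re_map_nonneg τ CFC.rpow_nonneg) _)
        (Real.rpow_nonneg (re_map_nonneg τ CFC.rpow_nonneg) _)) norm_u

theorem trace_abs_mul_le (τ : A →ₚ[ℂ] ℂ) (hτ : ∀ x y, τ (x * y) = τ (y * x)) {p q : ℝ}
    (hpq : p.HolderConjugate q) {a b : A} (ha : 0 ≤ a) (hb : 0 ≤ b) :
    (τ (CFC.abs (a * b))).re ≤ (τ (a ^ p)).re ^ p⁻¹ * (τ (b ^ q)).re ^ q⁻¹ := by
  let S : Set (A × A) := {a | IsStrictlyPositive a} ×ˢ {b | IsStrictlyPositive b}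
  have mem_closure_S : (a, b) ∈ closure S := by
    rw [closure_prod_eq]
    exact ⟨mem_closure_isStrictlyPositive ha, mem_closure_isStrictlyPositive hb⟩
  have rpow_continuous_fst : ContinuousWithinAt (fun x : A × A ↦ x.1 ^ p) S (a, b) :=
    (continuousOn_rpow_nonneg hpq.pos a ha).comp continuousWithinAt_fst fun _ hx ↦ hx.1.nonneg
  have rpow_continuous_snd : ContinuousWithinAt (fun x : A × A ↦ x.2 ^ q) S (a, b) :=
    (continuousOn_rpow_nonneg hpq.symm.pos b hb).comp continuousWithinAt_snd fun _ hx ↦ hx.2.nonneg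
  have re_continuous : Continuous fun x : A ↦ (τ x).re :=
    Complex.continuous_re.comp (map_continuous τ)
  refine ContinuousWithinAt.closure_le mem_closure_S (f := fun x ↦ (τ (CFC.abs (x.1 * x.2))).re)
    (g := fun x ↦ (τ (x.1 ^ p)).re ^ p⁻¹ * (τ (x.2 ^ q)).re ^ q⁻¹) ?_ ?_ ?_
  · exact (re_continuous.comp (CFC.continuous_abs.comp continuous_mul)).continuousWithinAt
  · exact ((re_continuous.continuousAt.comp_continuousWithinAt rpow_continuous_fst).rpow_const
      (.inr hpq.inv_nonneg)).mul
      ((re_continuous.continuousAt.comp_continuousWithinAt rpow_continuous_snd).rpow_const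
        (.inr hpq.symm.inv_nonneg))
  · rintro x ⟨hx₁, hx₂⟩
    exact trace_abs_mul_le_of_isStrictlyPositive τ hτ hpq hx₁ hx₂

end Holder

theorem tracial_young_inequality_general {A : Type*} [CStarAlgebra A] [PartialOrder A]
    [StarOrderedRing A] (τ : A →ₚ[ℂ] ℂ) (hτ : ∀ x y, τ (x * y) = τ (y * x)) {p q : ℝ}
    (hpq : p.HolderConjugate q) {a b : A} (ha : 0 ≤ a) (hb : 0 ≤ b) :
    τ (CStarAbs (a * b)) ≤ (p⁻¹ : ℂ) * τ (a ^ p) + (q⁻¹ : ℂ) * τ (b ^ q) := by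
  have young : (τ (CFC.abs (a * b))).re ≤ p⁻¹ * (τ (a ^ p)).re + q⁻¹ * (τ (b ^ q)).re :=
    (trace_abs_mul_le τ hτ hpq ha hb).trans <|
      Real.geom_mean_le_arith_mean2_weighted hpq.inv_nonneg hpq.symm.inv_nonneg
        (re_map_nonneg τ CFC.rpow_nonneg) (re_map_nonneg τ CFC.rpow_nonneg) hpq.inv_add_inv_eq_one
  rw [show CStarAbs (a * b) = CFC.abs (a * b) from rfl,
    ← ofReal_re_map_of_nonneg τ (CFC.abs_nonneg (a * b)),
    ← ofReal_re_map_of_nonneg τ (CFC.rpow_nonneg (a := a) (y := p)),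
    ← ofReal_re_map_of_nonneg τ (CFC.rpow_nonneg (a := b) (y := q))]
  exact_mod_cast young

/-- **Tracial Young inequality in a C*-algebra.** -/
theorem tracial_young_inequality {A : Type*} [CStarAlgebra A] [PartialOrder A] [StarOrderedRing A]
    (τ : A →ₗ[ℂ] ℂ) (hτ1 : τ 1 = 1)
    (hτpos : ∀ a : A, 0 ≤ a → 0 ≤ τ a)
    (hτtr : ∀ x y : A, τ (x * y) = τ (y * x))
    (hτfaithful : ∀ a : A, 0 ≤ a → τ a = 0 → a = 0)
    (p q : ℝ) (hp : 0 < p) (hq : 0 < q) (hpq : 1 / p + 1 / q = 1)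
    (a b : A) (ha : 0 ≤ a) (hb : 0 ≤ b) :
    τ (CStarAbs (a * b)) ≤ (p⁻¹ : ℂ) * τ (a ^ p) + (q⁻¹ : ℂ) * τ (b ^ q) :=
  tracial_young_inequality_general (.mk₀ τ hτpos) hτtr
    ⟨by simpa using hpq, hp, hq⟩ ha hb
end

section
/- Let A be a unital C*-algebra carrying a faithful tracial state τ, and let p, q be positive real numbers with 1/p + 1/q = 1. For positive elements a, b ∈ A, equality τ(|ab|) = p⁻¹ τ(aᵖ) + q⁻¹ τ(b^q) holds if and only if b^q = aᵖ. -/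
open scoped ComplexOrder

/-!
Write `x = aᵖ`, `y = b^q` and `‖c‖₁` for the norm of the functional `w ↦ τ (w * c)`. This norm is
unitarily invariant, so Hadamard's three lines theorem for `z ↦ e^{zX} B e^{zY}` makes
`s ↦ ‖x ^ s * y ^ (1 - s)‖₁` convex on `[0, 1]`, with end values `τ y` and `τ x`. Equality in
Young's inequality says that this convex function meets its chord at `s = p⁻¹`, hence at
`s = 1 / 2`: `τ x + τ y = 2 ‖√x √y‖₁`. For self-adjoint `Z`, Cauchy–Schwarz applied to
the factorization `√x √y = (√x e^{Z/2}) (e^{-Z/2} √y)` gives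
`2 ‖√x √y‖₁ ≤ τ (x e^Z) + τ (y e^{-Z})`. Therefore
`t ↦ τ (x e^{tw}) + τ (y e^{-tw})` is minimal at `t = 0` for `w = x - y`; its derivative there,
`τ ((x - y)²)`, vanishes, and faithfulness gives `x = y`.
-/

section Convex

theorem chord_le_of_convexOn {𝕜 : Type*} [Field 𝕜] [LinearOrder 𝕜] [IsStrictOrderedRing 𝕜]
    {s : Set 𝕜} {f : 𝕜 → 𝕜} (hf : ConvexOn 𝕜 s f) {a b x y : 𝕜} (ha : a ∈ s) (hb : b ∈ s)
    (hx : x ∈ Set.Ioo a b) (hfx : (b - x) * f a + (x - a) * f b ≤ (b - a) * f x)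
    (hy : y ∈ Set.Icc a b) : (b - y) * f a + (y - a) * f b ≤ (b - a) * f y := by
  have hys : y ∈ s := hf.1.ordConnected.out ha hb hy
  have hab : 0 ≤ b - a := sub_nonneg.2 (hx.1.trans hx.2).le
  rcases lt_trichotomy y x with hyx | rfl | hxy
  · have hsecant := hf.secant_mono_aux1 hys hb hyx hx.2
    have hby : 0 ≤ b - y := sub_nonneg.2 hy.2
    refine le_of_mul_le_mul_left ?_ (sub_pos.2 hx.2)
    linear_combination (b - y) * hfx + (b - a) * hsecant
  · exact hfx
  · have hsecant := hf.secant_mono_aux1 ha hys hx.1 hxy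
    have hya : 0 ≤ y - a := sub_nonneg.2 hy.1
    refine le_of_mul_le_mul_left ?_ (sub_pos.2 hx.1)
    linear_combination (y - a) * hfx + (b - a) * hsecant

end Convex

section ThreeLines

open NormedSpace (exp)
open Complex.HadamardThreeLines (verticalClosedStrip norm_le_interp_of_mem_verticalClosedStrip')

variable {A : Type*} [CStarAlgebra A]

theorem exists_unitary_exp_smul {X : A} (hX : IsSelfAdjoint X) (z : ℂ) :
    ∃ u ∈ unitary A, Commute u (exp (z.re • X)) ∧ exp (z • X) = u * exp (z.re • X) := by
  let +nondep : NormedAlgebra ℚ A := .restrictScalars ℚ ℂ A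
  have hcomm : Commute ((Complex.I * z.im) • X) (z.re • X) :=
    ((Commute.refl X).smul_left _).smul_right _
  refine ⟨exp ((Complex.I * z.im) • X), ?_, hcomm.exp, ?_⟩
  · have hzX : IsSelfAdjoint (z.im • X) := (IsSelfAdjoint.all _).smul hX
    simpa [smul_smul, ← Complex.coe_smul] using (selfAdjoint.expUnitary ⟨z.im • X, hzX⟩).2
  · rw [← NormedSpace.exp_add_of_commute hcomm, ← Complex.coe_smul z.re, ← add_smul, add_comm,
      mul_comm, Complex.re_add_im]

theorem convexOn_norm_of_norm_le_norm_re {E : Type*} [NormedAddCommGroup E] [NormedSpace ℂ E]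
    {F : ℂ → E} (hF : Differentiable ℂ F) (hF_re : ∀ z, ‖F z‖ ≤ ‖F z.re‖) :
    ConvexOn ℝ Set.univ fun s : ℝ ↦ ‖F s‖ := by
  refine LinearOrder.convexOn_of_lt convex_univ fun l _ u _ hlu α β hα hβ hαβ ↦ ?_
  have hbdd : BddAbove ((norm ∘ F) '' verticalClosedStrip l u) := by
    obtain ⟨M, hM⟩ := (isCompact_Icc (a := l) (b := u)).exists_bound_of_continuousOn
      (hF.continuous.comp Complex.continuous_ofReal).continuousOn
    refine ⟨M, ?_⟩
    rintro _ ⟨z, hz, rfl⟩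
    exact (hF_re z).trans (hM z.re hz)
  have hweight : (α * l + β * u - l) / (u - l) = β := by
    rw [div_eq_iff (sub_pos.2 hlu).ne']
    linear_combination l * hαβ
  have hmem : α • l + β • u ∈ Set.Icc l u :=
    convex_Icc l u (Set.left_mem_Icc.2 hlu.le) (Set.right_mem_Icc.2 hlu.le) hα.le hβ.le hαβ
  have hlines := norm_le_interp_of_mem_verticalClosedStrip' (z := ((α * l + β * u : ℝ) : ℂ))
    hlu hmem hF.diffContOnCl hbdd
    (fun z hz ↦ (hF_re z).trans_eq (by rw [show z.re = l from hz]))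
    (fun z hz ↦ (hF_re z).trans_eq (by rw [show z.re = u from hz]))
  rw [Complex.ofReal_re, hweight, ← eq_sub_of_add_eq hαβ] at hlines
  exact hlines.trans <| Real.geom_mean_le_arith_mean2_weighted hα.le hβ.le
    (norm_nonneg _) (norm_nonneg _) hαβ

theorem convexOn_norm_exp_smul_mul_mul_exp_smul {E : Type*} [NormedAddCommGroup E]
    [NormedSpace ℂ E] (T : A →L[ℂ] E)
    (hT : ∀ u ∈ unitary A, ∀ v ∈ unitary A, ∀ c, ‖T (u * c * v)‖ ≤ ‖T c‖)
    {X Y : A} (hX : IsSelfAdjoint X) (hY : IsSelfAdjoint Y) (B : A) :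
    ConvexOn ℝ Set.univ fun s : ℝ ↦ ‖T (exp (s • X) * B * exp (s • Y))‖ := by
  have hdiff : Differentiable ℂ fun z : ℂ ↦ T (exp (z • X) * B * exp (z • Y)) :=
    T.differentiable.comp <|
      ((differentiable_exp_smul_const ℂ X).mul_const B).mul (differentiable_exp_smul_const ℂ Y)
  simpa only [Complex.coe_smul] using convexOn_norm_of_norm_le_norm_re hdiff fun z ↦ by
    obtain ⟨u, hu, -, hXu⟩ := exists_unitary_exp_smul hX z
    obtain ⟨v, hv, hvY, hYv⟩ := exists_unitary_exp_smul hY z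
    simpa only [hXu, hYv, hvY.eq, mul_assoc, Complex.coe_smul] using
      hT u hu v hv (exp (z.re • X) * B * exp (z.re • Y))

end ThreeLines

section Rpow

open Filter Topology

variable {A : Type*} [CStarAlgebra A] [PartialOrder A] [StarOrderedRing A]

theorem rpow_eq_exp_smul_log {x : A} (hx : IsStrictlyPositive x) (s : ℝ) :
    x ^ s = NormedSpace.exp (s • CFC.log x) := by
  have hpos : ∀ r ∈ spectrum ℝ x, 0 < r := fun r hr ↦ hx.spectrum_pos hr
  have hlog : ContinuousOn Real.log (spectrum ℝ x) :=
    Real.continuousOn_log.mono fun r hr ↦ (hpos r hr).ne'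
  rw [CFC.log, ← cfc_const_mul s Real.log x hlog, ← CFC.real_exp_eq_normedSpace_exp,
    ← cfc_comp' Real.exp (fun r ↦ s * Real.log r) x (hg := by fun_prop)
      (hf := hlog.const_mul s), CFC.rpow_eq_cfc_real]
  exact cfc_congr fun r hr ↦ by rw [Real.rpow_def_of_pos (hpos r hr), mul_comm]

theorem rpow_mul_rpow_of_pos (x : A) {s t : ℝ} (hs : 0 < s) (ht : 0 < t) :
    x ^ s * x ^ t = x ^ (s + t) := by
  lift s to NNReal using hs.le
  lift t to NNReal using ht.le
  rw [NNReal.coe_pos] at hs ht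
  rw [← NNReal.coe_add, ← CFC.nnrpow_eq_rpow hs, ← CFC.nnrpow_eq_rpow ht,
    ← CFC.nnrpow_eq_rpow (add_pos hs ht), CFC.nnrpow_add hs ht]

theorem continuousOn_rpow_const {s : ℝ} (hs : 0 ≤ s) :
    ContinuousOn (fun x : A ↦ x ^ s) {x | 0 ≤ x} := by
  rcases hs.eq_or_lt with rfl | hs
  · exact continuousOn_const.congr CFC.rpow_zero_eqOn
  · lift s to NNReal using hs.le
    exact (CFC.continuousOn_nnrpow s).congr fun x _ ↦ (CFC.nnrpow_eq_rpow hs).symm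

theorem tendsto_add_algebraMap_rpow {x : A} (hx : 0 ≤ x) {s : ℝ} (hs : 0 ≤ s) :
    Tendsto (fun ε : ℝ ↦ (x + algebraMap ℝ A ε) ^ s) (𝓝[>] 0) (𝓝 (x ^ s)) := by
  have hcont : ContinuousWithinAt (fun ε : ℝ ↦ (x + algebraMap ℝ A ε) ^ s) (Set.Ioi 0) 0 := by
    refine ContinuousWithinAt.comp (t := {a | 0 ≤ a}) (continuousOn_rpow_const hs _ ?_)
      (by fun_prop) fun ε hε ↦ add_nonneg hx (algebraMap_nonneg A (le_of_lt hε))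
    simpa using hx
  simpa using hcont.tendsto

theorem isStrictlyPositive_add_algebraMap {x : A} (hx : 0 ≤ x) {ε : ℝ} (hε : 0 < ε) :
    IsStrictlyPositive (x + algebraMap ℝ A ε) :=
  (show IsStrictlyPositive (algebraMap ℝ A ε) by cfc_tac).nonneg_add hx

variable {E : Type*} [NormedAddCommGroup E] [NormedSpace ℂ E] (T : A →L[ℂ] E)
  (hT : ∀ u ∈ unitary A, ∀ v ∈ unitary A, ∀ c, ‖T (u * c * v)‖ ≤ ‖T c‖)
include hT

theorem convexOn_norm_rpow_mul_rpow_of_isStrictlyPositive {x y : A}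
    (hx : IsStrictlyPositive x) (hy : IsStrictlyPositive y) :
    ConvexOn ℝ Set.univ fun s : ℝ ↦ ‖T (x ^ s * y ^ (1 - s))‖ := by
  convert convexOn_norm_exp_smul_mul_mul_exp_smul T hT (X := CFC.log x) (Y := -CFC.log y)
    .log IsSelfAdjoint.log.neg y using 4 with s
  rw [rpow_eq_exp_smul_log hx, mul_assoc, smul_neg, ← neg_smul, ← rpow_eq_exp_smul_log hy,
    sub_eq_add_neg, CFC.rpow_add hy.isUnit, CFC.rpow_one y]

theorem convexOn_norm_rpow_mul_rpow {x y : A} (hx : 0 ≤ x) (hy : 0 ≤ y) :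
    ConvexOn ℝ (Set.Icc 0 1) fun s : ℝ ↦ ‖T (x ^ s * y ^ (1 - s))‖ := by
  have hlim {s : ℝ} (hs : s ∈ Set.Icc (0 : ℝ) 1) := (T.continuous.norm.tendsto _).comp <|
    (tendsto_add_algebraMap_rpow hx hs.1).mul
      (tendsto_add_algebraMap_rpow hy (sub_nonneg.2 hs.2))
  refine ⟨convex_Icc 0 1, fun l hl u hu α β hα hβ hαβ ↦
    le_of_tendsto_of_tendsto (hlim (convex_Icc 0 1 hl hu hα hβ hαβ))
      (((hlim hl).const_smul α).add ((hlim hu).const_smul β)) ?_⟩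
  filter_upwards [self_mem_nhdsWithin] with ε hε
  exact (convexOn_norm_rpow_mul_rpow_of_isStrictlyPositive T hT
    (isStrictlyPositive_add_algebraMap hx hε) (isStrictlyPositive_add_algebraMap hy hε)).2
    trivial trivial hα hβ hαβ

end Rpow

section ApproximatePolar

variable {A : Type*} [CStarAlgebra A] [PartialOrder A] [StarOrderedRing A]

theorem exists_isSelfAdjoint_mul_mul_self_mul_le_one {h : A} (hh : 0 ≤ h) {ε : ℝ} (hε : 0 < ε) :
    ∃ k : A, IsSelfAdjoint k ∧ k * (h * h) * k ≤ 1 ∧ h - algebraMap ℝ A ε ≤ k * (h * h) := by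
  have hspec : ∀ r ∈ spectrum ℝ h, 0 ≤ r := fun r hr ↦ spectrum_nonneg_of_nonneg hh hr
  have hcont : ContinuousOn (fun r : ℝ ↦ (r + ε)⁻¹) (spectrum ℝ h) :=
    ContinuousOn.inv₀ (by fun_prop) fun r hr ↦ by linarith [hspec r hr]
  have hk : cfc (fun r : ℝ ↦ (r + ε)⁻¹) h * (h * h) =
      cfc (fun r : ℝ ↦ (r + ε)⁻¹ * (r * r)) h := by
    rw [cfc_mul _ _ h hcont (by fun_prop), cfc_mul _ _ h (by fun_prop) (by fun_prop), cfc_id' ℝ h]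
  refine ⟨cfc (fun r : ℝ ↦ (r + ε)⁻¹) h, cfc_predicate _ h, ?_, ?_⟩
  · rw [hk, ← cfc_mul _ _ h (by fun_prop) hcont]
    refine cfc_le_one _ _ fun r hr ↦ ?_
    have := hspec r hr
    field_simp
    nlinarith
  · have hsub : h - algebraMap ℝ A ε = cfc (fun r : ℝ ↦ r - ε) h := by
      rw [cfc_sub .., cfc_id' .., cfc_const ..]
    rw [hsub, hk]
    refine cfc_mono (fun r hr ↦ ?_) (by fun_prop) (by fun_prop)
    have := hspec r hr
    field_simp
    nlinarith

theorem exists_norm_le_one_abs_sub_algebraMap_le (c : A) {ε : ℝ} (hε : 0 < ε) :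
    ∃ v : A, ‖v‖ ≤ 1 ∧ CFC.abs c - algebraMap ℝ A ε ≤ star v * c := by
  obtain ⟨k, hk, hk_le, hk_ge⟩ :=
    exists_isSelfAdjoint_mul_mul_self_mul_le_one (CFC.abs_nonneg c) hε
  rw [CFC.abs_mul_abs] at hk_le hk_ge
  refine ⟨c * k, ?_, by rwa [star_mul, hk.star_eq, mul_assoc]⟩
  have hv : star (c * k) * (c * k) ≤ 1 := by
    rwa [star_mul, hk.star_eq, mul_assoc, ← mul_assoc (star c), ← mul_assoc]
  rwa [← CStarAlgebra.norm_le_one_iff_of_nonneg _ (star_mul_self_nonneg _),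
    CStarRing.norm_star_mul_self, ← sq, sq_le_one_iff₀ (norm_nonneg _)] at hv

end ApproximatePolar

section TraceNorm

open NormedSpace (exp)
open Filter Topology

variable {A : Type*} [CStarAlgebra A] [PartialOrder A] [StarOrderedRing A]

/-- A positive functional on a C⋆-algebra, as a continuous linear map. -/
noncomputable def continuousLinearMapOfPositive (τ : A →ₚ[ℂ] ℂ) : A →L[ℂ] ℂ :=
  τ.toLinearMap.mkContinuous τ.exists_norm_apply_le.choose τ.exists_norm_apply_le.choose_spec

/-- The functional `w ↦ τ (w * c)`, depending linearly on `c`. When `τ` is tracial, its operator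
norm is the trace norm `τ |c|`. -/
noncomputable def traceDual (τ : A →ₚ[ℂ] ℂ) : A →L[ℂ] A →L[ℂ] ℂ :=
  .compL ℂ A A ℂ (continuousLinearMapOfPositive τ) ∘L (ContinuousLinearMap.mul ℂ A).flip

theorem traceDual_apply (τ : A →ₚ[ℂ] ℂ) (c w : A) : traceDual τ c w = τ (w * c) := rfl

theorem re_abs_le_norm_traceDual (τ : A →ₚ[ℂ] ℂ) (c : A) :
    (τ (CFC.abs c)).re ≤ ‖traceDual τ c‖ := by
  have hlim : Tendsto (fun ε : ℝ ↦ (τ (CFC.abs c)).re - ε * (τ 1).re) (𝓝[>] 0)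
      (𝓝 (τ (CFC.abs c)).re) :=
    (Continuous.tendsto' (by fun_prop) 0 _ (by simp)).mono_left nhdsWithin_le_nhds
  refine le_of_tendsto hlim ?_
  filter_upwards [self_mem_nhdsWithin] with ε hε
  obtain ⟨v, hv, hvc⟩ := exists_norm_le_one_abs_sub_algebraMap_le c hε
  calc (τ (CFC.abs c)).re - ε * (τ 1).re
      = (τ (CFC.abs c - algebraMap ℝ A ε)).re := by
        simp [Algebra.algebraMap_eq_smul_one, ← Complex.coe_smul]
    _ ≤ (τ (star v * c)).re := (Complex.le_def.1 (OrderHomClass.mono τ hvc)).1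
    _ ≤ ‖traceDual τ c (star v)‖ := Complex.re_le_norm _
    _ ≤ ‖traceDual τ c‖ := (traceDual τ c).unit_le_opNorm _ (by rwa [norm_star])

theorem hasDerivAt_re_apply_mul_exp_smul (τ : A →ₚ[ℂ] ℂ) (x w : A) :
    HasDerivAt (fun t : ℝ ↦ (τ (x * exp (t • w))).re) (τ (x * w)).re 0 := by
  have hexp := (hasDerivAt_exp_smul_const (𝕂 := ℝ) w 0).const_mul x
  rw [zero_smul, NormedSpace.exp_zero, one_mul] at hexp
  exact (Complex.reCLM ∘L
    (continuousLinearMapOfPositive τ).restrictScalars ℝ).hasFDerivAt.comp_hasDerivAt 0 hexp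

theorem norm_toPreGNS_sq (τ : A →ₚ[ℂ] ℂ) (a : A) :
    ‖τ.toPreGNS a‖ ^ 2 = (τ (star a * a)).re := by
  simpa [← Complex.ofReal_pow] using congrArg Complex.re (τ.preGNS_norm_sq (τ.toPreGNS a))

theorem norm_toPreGNS_mul_le (τ : A →ₚ[ℂ] ℂ) (w a : A) :
    ‖τ.toPreGNS (w * a)‖ ≤ ‖w‖ * ‖τ.toPreGNS a‖ :=
  (τ.leftMulMapPreGNS w).le_of_opNorm_le (LinearMap.mkContinuous_norm_le _ (norm_nonneg w) _) _

variable {τ : A →ₚ[ℂ] ℂ} (hτ : ∀ a b, τ (a * b) = τ (b * a))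
include hτ

theorem norm_traceDual_unitary_mul_mul_le {u v : A} (hu : u ∈ unitary A) (hv : v ∈ unitary A)
    (c : A) : ‖traceDual τ (u * c * v)‖ ≤ ‖traceDual τ c‖ := by
  refine ContinuousLinearMap.opNorm_le_bound _ (norm_nonneg _) fun w ↦ ?_
  have hcycle : traceDual τ (u * c * v) w = traceDual τ c (v * w * u) := by
    simp only [traceDual_apply, ← mul_assoc]
    rw [hτ _ v]
    simp only [← mul_assoc]
  calc ‖traceDual τ (u * c * v) w‖ ≤ ‖traceDual τ c‖ * ‖v * w * u‖ :=
        hcycle ▸ (traceDual τ c).le_opNorm _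
    _ = ‖traceDual τ c‖ * ‖w‖ := by
        rw [CStarRing.norm_mul_mem_unitary _ hu, CStarRing.norm_mem_unitary_mul _ hv]

theorem norm_traceDual_mul_le (a b : A) :
    ‖traceDual τ (a * b)‖ ≤ ‖τ.toPreGNS a‖ * ‖τ.toPreGNS (star b)‖ := by
  refine ContinuousLinearMap.opNorm_le_bound _ (by positivity) fun w ↦ ?_
  calc ‖traceDual τ (a * b) w‖ = ‖inner ℂ (τ.toPreGNS (star b)) (τ.toPreGNS (w * a))‖ := by
        rw [τ.preGNS_inner_def, traceDual_apply, ← mul_assoc, hτ]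
        simp
    _ ≤ ‖τ.toPreGNS (star b)‖ * (‖w‖ * ‖τ.toPreGNS a‖) :=
        (norm_inner_le_norm _ _).trans <| by gcongr; exact norm_toPreGNS_mul_le τ w a
    _ = ‖τ.toPreGNS a‖ * ‖τ.toPreGNS (star b)‖ * ‖w‖ := by ring

theorem two_mul_norm_traceDual_mul_le (a b : A) :
    2 * ‖traceDual τ (a * b)‖ ≤ (τ (star a * a)).re + (τ (star b * b)).re := by
  calc 2 * ‖traceDual τ (a * b)‖ ≤ 2 * (‖τ.toPreGNS a‖ * ‖τ.toPreGNS (star b)‖) := by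
        gcongr; exact norm_traceDual_mul_le hτ a b
    _ ≤ ‖τ.toPreGNS a‖ ^ 2 + ‖τ.toPreGNS (star b)‖ ^ 2 := by
        rw [← mul_assoc]; exact two_mul_le_add_sq _ _
    _ = (τ (star a * a)).re + (τ (star b * b)).re := by
        rw [norm_toPreGNS_sq, norm_toPreGNS_sq, star_star, hτ b]

theorem norm_traceDual_of_nonneg {x : A} (hx : 0 ≤ x) : ‖traceDual τ x‖ = (τ x).re := by
  refine le_antisymm ?_ ?_
  · have hsqrt := two_mul_norm_traceDual_mul_le hτ (CFC.sqrt x) (CFC.sqrt x)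
    rw [(CFC.sqrt_nonneg x).star_eq, CFC.sqrt_mul_sqrt_self x] at hsqrt
    linarith
  · simpa [CFC.abs_of_nonneg x hx] using re_abs_le_norm_traceDual τ x

theorem two_mul_norm_traceDual_sqrt_mul_sqrt_le {x y Z : A} (hx : 0 ≤ x) (hy : 0 ≤ y)
    (hZ : IsSelfAdjoint Z) :
    2 * ‖traceDual τ (CFC.sqrt x * CFC.sqrt y)‖ ≤
      (τ (x * exp Z)).re + (τ (y * exp (-Z))).re := by
  let +nondep : NormedAlgebra ℚ A := .restrictScalars ℚ ℂ A
  obtain ⟨H, hH, rfl⟩ : ∃ H, IsSelfAdjoint H ∧ H + H = Z :=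
    ⟨(2⁻¹ : ℝ) • Z, (IsSelfAdjoint.all _).smul hZ, by rw [← add_smul]; norm_num⟩
  have hdouble (W : A) : exp W * exp W = exp (W + W) :=
    (NormedSpace.exp_add_of_commute (.refl W)).symm
  have hcancel : exp H * exp (-H) = 1 := by
    rw [← NormedSpace.exp_add_of_commute (Commute.refl H).neg_right, add_neg_cancel,
      NormedSpace.exp_zero]
  have hx_conj : τ (star (CFC.sqrt x * exp H) * (CFC.sqrt x * exp H)) = τ (x * exp (H + H)) := by
    rw [star_mul, hH.exp.star_eq, (CFC.sqrt_nonneg x).star_eq, mul_assoc, hτ, mul_assoc,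
      mul_assoc, ← mul_assoc, CFC.sqrt_mul_sqrt_self x, hdouble]
  have hy_conj : τ (star (exp (-H) * CFC.sqrt y) * (exp (-H) * CFC.sqrt y)) =
      τ (y * exp (-(H + H))) := by
    rw [star_mul, hH.neg.exp.star_eq, (CFC.sqrt_nonneg y).star_eq, ← mul_assoc, hτ,
      ← mul_assoc, ← mul_assoc, CFC.sqrt_mul_sqrt_self y, mul_assoc, hdouble, ← neg_add]
  calc 2 * ‖traceDual τ (CFC.sqrt x * CFC.sqrt y)‖
      = 2 * ‖traceDual τ (CFC.sqrt x * exp H * (exp (-H) * CFC.sqrt y))‖ := by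
        rw [mul_assoc, ← mul_assoc (exp H), hcancel, one_mul]
    _ ≤ _ := two_mul_norm_traceDual_mul_le hτ _ _
    _ = (τ (x * exp (H + H))).re + (τ (y * exp (-(H + H)))).re := by rw [hx_conj, hy_conj]

theorem re_sub_mul_eq_zero_of_le_two_mul_norm_traceDual {x y : A} (hx : 0 ≤ x) (hy : 0 ≤ y)
    (hxy : (τ x).re + (τ y).re ≤ 2 * ‖traceDual τ (CFC.sqrt x * CFC.sqrt y)‖)
    {w : A} (hw : IsSelfAdjoint w) : (τ ((x - y) * w)).re = 0 := by
  have hderiv := (hasDerivAt_re_apply_mul_exp_smul τ x w).add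
    (hasDerivAt_re_apply_mul_exp_smul τ y (-w))
  have hmin : IsLocalMin ((fun t : ℝ ↦ (τ (x * exp (t • w))).re) +
      fun t : ℝ ↦ (τ (y * exp (t • -w))).re) 0 := .of_forall fun t ↦ by
    simpa using hxy.trans <|
      two_mul_norm_traceDual_sqrt_mul_sqrt_le hτ hx hy ((IsSelfAdjoint.all t).smul hw)
  simpa [sub_mul, ← sub_eq_add_neg] using hmin.hasDerivAt_eq_zero hderiv

variable (hfaithful : ∀ a, 0 ≤ a → τ a = 0 → a = 0)
include hfaithful

theorem eq_of_re_add_re_le_two_mul_norm_traceDual {x y : A} (hx : 0 ≤ x) (hy : 0 ≤ y)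
    (hxy : (τ x).re + (τ y).re ≤ 2 * ‖traceDual τ (CFC.sqrt x * CFC.sqrt y)‖) : x = y := by
  have hsa : IsSelfAdjoint (x - y) := hx.isSelfAdjoint.sub hy.isSelfAdjoint
  have hsq : 0 ≤ star (x - y) * (x - y) := star_mul_self_nonneg _
  have hτsq : τ (star (x - y) * (x - y)) = 0 := by
    refine Complex.ext ?_ (Complex.le_def.1 (map_nonneg τ hsq)).2.symm
    rw [hsa.star_eq, re_sub_mul_eq_zero_of_le_two_mul_norm_traceDual hτ hx hy hxy hsa,
      Complex.zero_re]
  exact sub_eq_zero.1 ((CStarRing.star_mul_self_eq_zero_iff _).1 (hfaithful _ hsq hτsq))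

theorem eq_of_re_add_re_le_re_abs_rpow_mul_rpow {x y : A} (hx : 0 ≤ x) (hy : 0 ≤ y)
    {t : ℝ} (ht : t ∈ Set.Ioo (0 : ℝ) 1)
    (hxy : t * (τ x).re + (1 - t) * (τ y).re ≤ (τ (CFC.abs (x ^ t * y ^ (1 - t)))).re) :
    x = y := by
  have hconv := convexOn_norm_rpow_mul_rpow (traceDual τ)
    (fun u hu v hv ↦ norm_traceDual_unitary_mul_mul_le hτ hu hv) hx hy
  have hzero : ‖traceDual τ (x ^ (0 : ℝ) * y ^ (1 - 0 : ℝ))‖ = (τ y).re := by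
    rw [sub_zero, CFC.rpow_zero x, one_mul, CFC.rpow_one y, norm_traceDual_of_nonneg hτ hy]
  have hone : ‖traceDual τ (x ^ (1 : ℝ) * y ^ (1 - 1 : ℝ))‖ = (τ x).re := by
    rw [sub_self, CFC.rpow_zero y, mul_one, CFC.rpow_one x, norm_traceDual_of_nonneg hτ hx]
  have hchord_t := hxy.trans (re_abs_le_norm_traceDual τ _)
  have hchord_half := chord_le_of_convexOn hconv (y := 1 / 2) (by simp) (by simp) ht
    (by rw [hzero, hone]; linarith) (by norm_num)
  rw [hzero, hone, sub_self_div_two, ← CFC.sqrt_eq_rpow, ← CFC.sqrt_eq_rpow] at hchord_half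
  exact eq_of_re_add_re_le_two_mul_norm_traceDual hτ hfaithful hx hy (by linarith)

theorem tracial_young_equality_iff_general {p q : ℝ} (hpq : p.HolderConjugate q)
    {a b : A} (ha : 0 ≤ a) (hb : 0 ≤ b) :
    τ (CFC.abs (a * b)) = (p⁻¹ : ℂ) * τ (a ^ p) + (q⁻¹ : ℂ) * τ (b ^ q) ↔ b ^ q = a ^ p := by
  have ha_root : (a ^ p) ^ p⁻¹ = a := by
    rw [CFC.rpow_rpow_of_exponent_nonneg a _ _ hpq.nonneg hpq.inv_nonneg,
      mul_inv_cancel₀ hpq.ne_zero, CFC.rpow_one a]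
  have hb_root : (b ^ q) ^ q⁻¹ = b := by
    rw [CFC.rpow_rpow_of_exponent_nonneg b _ _ hpq.symm.nonneg hpq.symm.inv_nonneg,
      mul_inv_cancel₀ hpq.symm.ne_zero, CFC.rpow_one b]
  constructor
  · intro heq
    refine (eq_of_re_add_re_le_re_abs_rpow_mul_rpow hτ hfaithful CFC.rpow_nonneg CFC.rpow_nonneg
      ⟨hpq.inv_pos, inv_lt_one_of_one_lt₀ hpq.lt⟩ ?_).symm
    rw [hpq.one_sub_inv, ha_root, hb_root, heq]
    simp [← Complex.ofReal_inv]
  · intro hba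
    have hab : a * b = a ^ p := by
      calc a * b = (a ^ p) ^ p⁻¹ * (a ^ p) ^ q⁻¹ := by rw [ha_root, ← hba, hb_root]
        _ = a ^ p := by
          rw [rpow_mul_rpow_of_pos _ hpq.inv_pos hpq.symm.inv_pos, hpq.inv_add_inv_eq_one,
            CFC.rpow_one _ CFC.rpow_nonneg]
    have hinv : (p : ℂ)⁻¹ + (q : ℂ)⁻¹ = 1 := mod_cast hpq.inv_add_inv_eq_one
    rw [hab, hba, CFC.abs_of_nonneg _ CFC.rpow_nonneg, ← add_mul, hinv, one_mul]

end TraceNorm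

/-- **Equality in the tracial Young inequality in a C*-algebra.** -/
theorem tracial_young_equality_iff {A : Type*} [CStarAlgebra A] [PartialOrder A] [StarOrderedRing A]
    (τ : A →ₗ[ℂ] ℂ) (hτ1 : τ 1 = 1)
    (hτpos : ∀ a : A, 0 ≤ a → 0 ≤ τ a)
    (hτtr : ∀ x y : A, τ (x * y) = τ (y * x))
    (hτfaithful : ∀ a : A, 0 ≤ a → τ a = 0 → a = 0)
    (p q : ℝ) (hp : 0 < p) (hq : 0 < q) (hpq : 1 / p + 1 / q = 1)
    (a b : A) (ha : 0 ≤ a) (hb : 0 ≤ b) :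
    τ (CStarAbs (a * b)) = (p⁻¹ : ℂ) * τ (a ^ p) + (q⁻¹ : ℂ) * τ (b ^ q) ↔ b ^ q = a ^ p :=
  tracial_young_equality_iff_general (τ := .mk₀ τ hτpos) hτtr hτfaithful
    ⟨by simpa using hpq, hp, hq⟩ ha hb
end

section
/- Let A be a unital C*-algebra carrying a faithful tracial state τ. If positive elements a, b ∈ A satisfy τ(|ab|) = (1/2) τ(a²) + (1/2) τ(b²), then b = a. -/
open scoped ComplexOrder

/-!
Write `‖x‖₂` for the seminorm `τ(x*x)^(1/2)`. Polar decomposition suggests `|ab| = u*ab` with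
`‖u‖ ≤ 1`. For any contraction `u`, the elements `d = b - au` and `w = a(1 - uu*)a ≥ 0` satisfy
`τ(d*d) + τ(w) = τ(a²) + τ(b²) - 2 Re τ(u*ab)`, while `a² - b² = w - db - bd* + dd*`. By
Cauchy–Schwarz, `a² - b²` is therefore small in the trace norm as soon as the right-hand side is
small. No such `u` need exist in the algebra itself, but `|ab|` is a norm limit of elements `u*ab`
and `τ` is norm continuous, so the estimate passes to the limit.
-/

section

variable {A : Type*} [NonUnitalCStarAlgebra A] [PartialOrder A]

/-- Twice the defect `½ τ(a²) + ½ τ(b²) - Re τ(y)` in the Young inequality. The case of interest is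
`y = |ab|`; `y` is kept free so that `|ab|` can be approximated. -/
noncomputable def youngDefect (τ : A →ₚ[ℂ] ℂ) (a b y : A) : ℝ :=
  (τ (a * a)).re + (τ (b * b)).re - 2 * (τ y).re

variable [StarOrderedRing A]

theorem star_mul_cfcₙ_abs_mul_self (z : A) {f : ℝ → ℝ}
    (hf : ContinuousOn f (quasispectrum ℝ (CFC.abs z))) (hf0 : f 0 = 0) :
    star (z * cfcₙ f (CFC.abs z)) * z = cfcₙ (fun t ↦ f t * (t * t)) (CFC.abs z) := by
  have habs : IsSelfAdjoint (CFC.abs z) := (CFC.abs_nonneg z).isSelfAdjoint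
  rw [star_mul, (cfcₙ_predicate f (CFC.abs z) : IsSelfAdjoint _).star_eq, mul_assoc,
    ← CFC.abs_mul_abs z, cfcₙ_mul f (fun t ↦ t * t) (CFC.abs z),
    cfcₙ_mul (fun t ↦ t) (fun t ↦ t) (CFC.abs z), cfcₙ_id' ℝ (CFC.abs z)]

theorem abs_mem_closure_star_mul_closedBall (z : A) :
    CFC.abs z ∈ closure ((fun u : A ↦ star u * z) '' Metric.closedBall 0 1) := by
  refine Metric.mem_closure_iff.2 fun ε hε ↦ ?_
  have habs : IsSelfAdjoint (CFC.abs z) := (CFC.abs_nonneg z).isSelfAdjoint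
  have den_pos (t : ℝ) : 0 < t ^ 2 + ε ^ 2 := by positivity
  -- `f` approximates `t ↦ t⁻¹`; it vanishes at `0`, so that `f(|z|)` exists without a unit.
  let f : ℝ → ℝ := fun t ↦ t / (t ^ 2 + ε ^ 2)
  have hf : Continuous f := by fun_prop (disch := exact fun t ↦ (den_pos t).ne')
  have hf0 : f 0 = 0 := by simp [f]
  set u := z * cfcₙ f (CFC.abs z)
  have star_u_mul : star u * z = cfcₙ (fun t ↦ f t * (t * t)) (CFC.abs z) :=
    star_mul_cfcₙ_abs_mul_self z hf.continuousOn hf0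
  have norm_u_le : ‖u‖ ≤ 1 := by
    suffices ‖star u * u‖ ≤ 1 by
      rwa [CStarRing.norm_star_mul_self, ← sq, sq_le_one_iff₀ (norm_nonneg u)] at this
    rw [← mul_assoc, star_u_mul, ← cfcₙ_mul (fun t ↦ f t * (t * t)) f (CFC.abs z)]
    refine norm_cfcₙ_le fun t _ ↦ ?_
    have : f t * (t * t) * f t = (t ^ 2 / (t ^ 2 + ε ^ 2)) ^ 2 := by simp only [f]; ring
    rw [this, Real.norm_of_nonneg (by positivity)]
    exact pow_le_one₀ (by positivity) ((div_le_one (den_pos t)).2 (by nlinarith))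
  have norm_sub_le : ‖CFC.abs z - star u * z‖ ≤ ε / 2 := by
    have sub_eq : CFC.abs z - star u * z = cfcₙ (fun t ↦ t - f t * (t * t)) (CFC.abs z) := by
      rw [cfcₙ_sub (fun t ↦ t) (fun t ↦ f t * (t * t)) (CFC.abs z), cfcₙ_id' ℝ (CFC.abs z),
        star_u_mul]
    rw [sub_eq]
    refine norm_cfcₙ_le fun t _ ↦ ?_
    have : t - f t * (t * t) = ε ^ 2 * t / (t ^ 2 + ε ^ 2) := by
      simp only [f]; field_simp [(den_pos t).ne']; ring
    rw [this, Real.norm_eq_abs, abs_div, abs_of_pos (den_pos t), div_le_iff₀ (den_pos t),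
      abs_mul, abs_of_nonneg (sq_nonneg ε), ← sq_abs t]
    nlinarith [mul_nonneg hε.le (sq_nonneg (|t| - ε))]
  exact ⟨_, ⟨u, mem_closedBall_zero_iff.2 norm_u_le, rfl⟩,
    (dist_eq_norm _ _).trans_lt (norm_sub_le.trans_lt (half_lt_self hε))⟩

variable (τ : A →ₚ[ℂ] ℂ)

theorem preGNS_norm_sq_eq_re (x : A) : ‖τ.toPreGNS x‖ ^ 2 = (τ (star x * x)).re := by
  simpa [← Complex.ofReal_pow] using congrArg Complex.re (τ.preGNS_norm_sq (τ.toPreGNS x))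

theorem preGNS_norm_mul_le (x y : A) : ‖τ.toPreGNS (x * y)‖ ≤ ‖x‖ * ‖τ.toPreGNS y‖ :=
  (τ.leftMulMapPreGNS x).le_of_opNorm_le
    (LinearMap.mkContinuous_norm_le _ (norm_nonneg x) _) (τ.toPreGNS y)

variable {τ} (hτ : ∀ x y : A, τ (x * y) = τ (y * x)) {a b : A}
include hτ

theorem norm_trace_mul_mul_star_le (x p q : A) :
    ‖τ (x * (p * star q))‖ ≤ ‖x‖ * (‖τ.toPreGNS p‖ * ‖τ.toPreGNS q‖) :=
  calc ‖τ (x * (p * star q))‖ = ‖inner ℂ (τ.toPreGNS q) (τ.toPreGNS (x * p))‖ := by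
        rw [← mul_assoc, hτ]; rfl
    _ ≤ ‖τ.toPreGNS q‖ * ‖τ.toPreGNS (x * p)‖ := norm_inner_le_norm _ _
    _ ≤ ‖τ.toPreGNS q‖ * (‖x‖ * ‖τ.toPreGNS p‖) := by gcongr; exact preGNS_norm_mul_le τ x p
    _ = ‖x‖ * (‖τ.toPreGNS p‖ * ‖τ.toPreGNS q‖) := by ring

theorem norm_trace_mul_le_of_nonneg (x : A) {w : A} (hw : 0 ≤ w) :
    ‖τ (x * w)‖ ≤ ‖x‖ * (τ w).re := by
  have hs : star (CFC.sqrt w) = CFC.sqrt w := (CFC.sqrt_nonneg w).isSelfAdjoint.star_eq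
  simpa only [← sq, preGNS_norm_sq_eq_re, hs, CFC.sqrt_mul_sqrt_self w hw] using
    norm_trace_mul_mul_star_le hτ x (CFC.sqrt w) (CFC.sqrt w)

theorem preGNS_norm_sq_add_re_eq_youngDefect (ha : IsSelfAdjoint a) (hb : IsSelfAdjoint b) (u : A) :
    ‖τ.toPreGNS (b - a * u)‖ ^ 2 + (τ (a * a - a * (u * star u) * a)).re =
      youngDefect τ a b (star u * (a * b)) := by
  have star_mul_self : star (b - a * u) * (b - a * u) =
      b * b - star (star u * (a * b)) - star u * (a * b) + star u * a * (a * u) := by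
    simp only [star_sub, star_mul, star_star, ha.star_eq, hb.star_eq]; noncomm_ring
  have trace_comm : τ (a * (u * star u) * a) = τ (star u * a * (a * u)) := by
    rw [← mul_assoc a u, mul_assoc (a * u), hτ]
  rw [preGNS_norm_sq_eq_re, star_mul_self]
  simp only [youngDefect, map_add, map_sub, map_star, trace_comm, Complex.add_re, Complex.sub_re,
    Complex.star_def, Complex.conj_re]
  ring

theorem norm_trace_mul_sq_sub_sq_le_of_norm_le_one (ha : IsSelfAdjoint a) (hb : IsSelfAdjoint b)
    {u : A} (hu : ‖u‖ ≤ 1) (x : A) :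
    ‖τ (x * (a * a - b * b))‖ ≤
      ‖x‖ * (youngDefect τ a b (star u * (a * b)) +
        2 * ‖τ.toPreGNS b‖ * √(youngDefect τ a b (star u * (a * b)))) := by
  have defect_eq := preGNS_norm_sq_add_re_eq_youngDefect hτ ha hb u
  set δ := youngDefect τ a b (star u * (a * b))
  set d := b - a * u with hd
  set w := a * a - a * (u * star u) * a with hw_def
  have hw : 0 ≤ w := by
    have conj_le := CStarAlgebra.star_left_conjugate_le_norm_smul (.mul_star_self u) (a := a)
    rw [ha.star_eq, CStarRing.norm_self_mul_star] at conj_le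
    have haa : 0 ≤ a * a := by simpa [ha.star_eq] using star_mul_self_nonneg a
    have smul_le := smul_le_of_le_one_left haa (mul_le_one₀ hu (norm_nonneg u) hu)
    exact sub_nonneg.2 (conj_le.trans smul_le)
  have decomposition : x * (a * a - b * b) =
      x * w - x * (d * star b) - x * (b * star d) + x * (d * star d) := by
    simp only [hd, hw_def, star_sub, star_mul, ha.star_eq, hb.star_eq]; noncomm_ring
  have norm_d_le : ‖τ.toPreGNS d‖ ≤ √δ :=
    Real.le_sqrt_of_sq_le (by linarith [(Complex.nonneg_iff.1 (τ.map_nonneg hw)).1])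
  calc ‖τ (x * (a * a - b * b))‖
      ≤ ‖τ (x * w)‖ + ‖τ (x * (d * star b))‖ + ‖τ (x * (b * star d))‖ +
          ‖τ (x * (d * star d))‖ := by
        rw [decomposition, map_add, map_sub, map_sub]
        refine (norm_add_le _ _).trans ?_
        gcongr
        refine (norm_sub_le _ _).trans ?_
        gcongr
        exact norm_sub_le _ _
    _ ≤ ‖x‖ * (τ w).re + ‖x‖ * (‖τ.toPreGNS d‖ * ‖τ.toPreGNS b‖) +
          ‖x‖ * (‖τ.toPreGNS b‖ * ‖τ.toPreGNS d‖) +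
          ‖x‖ * (‖τ.toPreGNS d‖ * ‖τ.toPreGNS d‖) := by
        gcongr
        · exact norm_trace_mul_le_of_nonneg hτ x hw
        all_goals exact norm_trace_mul_mul_star_le hτ x _ _
    _ = ‖x‖ * (δ + 2 * ‖τ.toPreGNS b‖ * ‖τ.toPreGNS d‖) := by rw [← defect_eq]; ring
    _ ≤ ‖x‖ * (δ + 2 * ‖τ.toPreGNS b‖ * √δ) := by gcongr

theorem norm_trace_mul_sq_sub_sq_le (ha : IsSelfAdjoint a) (hb : IsSelfAdjoint b) (x : A) :
    ‖τ (x * (a * a - b * b))‖ ≤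
      ‖x‖ * (youngDefect τ a b (CFC.abs (a * b)) +
        2 * ‖τ.toPreGNS b‖ * √(youngDefect τ a b (CFC.abs (a * b)))) := by
  have defect_continuous : Continuous (youngDefect τ a b) := by
    have := map_continuous τ
    unfold youngDefect
    fun_prop
  refine closure_minimal (Set.image_subset_iff.2 fun u hu ↦ ?_)
    (isClosed_le continuous_const (by fun_prop) :
      IsClosed {y | ‖τ (x * (a * a - b * b))‖ ≤
        ‖x‖ * (youngDefect τ a b y + 2 * ‖τ.toPreGNS b‖ * √(youngDefect τ a b y))})
    (abs_mem_closure_star_mul_closedBall (a * b))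
  exact norm_trace_mul_sq_sub_sq_le_of_norm_le_one hτ ha hb (mem_closedBall_zero_iff.1 hu) x

theorem tracial_young_equality_two_general (hτfaithful : ∀ x : A, 0 ≤ x → τ x = 0 → x = 0)
    (ha : 0 ≤ a) (hb : 0 ≤ b)
    (h : τ (CFC.abs (a * b)) = (1 / 2 : ℂ) * τ (a * a) + (1 / 2 : ℂ) * τ (b * b)) :
    b = a := by
  have defect_eq_zero : youngDefect τ a b (CFC.abs (a * b)) = 0 := by
    have re_h : (τ (CFC.abs (a * b))).re = 1 / 2 * (τ (a * a)).re + 1 / 2 * (τ (b * b)).re := by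
      simpa using congrArg Complex.re h
    rw [youngDefect, re_h]
    ring
  have trace_eq_zero (x : A) : τ (x * (a * a - b * b)) = 0 := by
    simpa [defect_eq_zero] using
      norm_trace_mul_sq_sub_sq_le hτ ha.isSelfAdjoint hb.isSelfAdjoint x
  have sq_eq_sq : a * a = b * b := sub_eq_zero.1 <| CStarRing.star_mul_self_eq_zero_iff _ |>.1 <|
    hτfaithful _ (star_mul_self_nonneg _) (trace_eq_zero _)
  rw [← CFC.sqrt_mul_self b, ← sq_eq_sq, CFC.sqrt_mul_self a]

end

/-- **Equality in the tracial arithmetic–geometric mean (p = q = 2) Young inequality.** -/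
theorem tracial_young_equality_two {A : Type*} [CStarAlgebra A] [PartialOrder A]
    [StarOrderedRing A]
    (τ : A →ₗ[ℂ] ℂ) (hτ1 : τ 1 = 1)
    (hτpos : ∀ a : A, 0 ≤ a → 0 ≤ τ a)
    (hτtr : ∀ x y : A, τ (x * y) = τ (y * x))
    (hτfaithful : ∀ a : A, 0 ≤ a → τ a = 0 → a = 0)
    (a b : A) (ha : 0 ≤ a) (hb : 0 ≤ b)
    (h : τ (CStarAbs (a * b)) = (1 / 2 : ℂ) * τ (a ^ 2) + (1 / 2 : ℂ) * τ (b ^ 2)) :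
    b = a := by
  simp only [sq] at h
  exact tracial_young_equality_two_general (τ := .mk₀ τ hτpos) hτtr hτfaithful ha hb h
end

section
/- Let A be a unital C*-algebra carrying a tracial state τ. Then for all positive elements a, b ∈ A, τ(|ab|^{1/2}) ≤ (τ(a) τ(b))^{1/2} ≤ (1/2)(τ(a) + τ(b)), where all the displayed traces are (nonnegative) real numbers. -/
open scoped ComplexOrder

/-!
Write `k = |ab|^(1/2)`, so that `k⁴ = b a² b`, and suppose first that `a` and `b` are invertible.
The Cauchy–Schwarz inequality applied to `k = (k b^(-1/2)) b^(1/2)` gives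
`τ(k)² ≤ τ(k b⁻¹ k) τ(b) = τ(w) τ(b)` with `w = k² b⁻¹`. Since `w* w = a²`, Cauchy–Schwarz applied
to `w = (w a^(-1/2)) a^(1/2)` gives `|τ(w)|² ≤ τ(a⁻¹ w* w) τ(a) = τ(a)²`. The general case follows
by adding `ε > 0` to `a` and `b` and letting `ε` tend to `0`.
-/

theorem norm_sq_apply_star_mul_le {A : Type*} [NonUnitalCStarAlgebra A] [PartialOrder A]
    [StarOrderedRing A] (f : A →ₚ[ℂ] ℂ) (x y : A) :
    ‖f (star x * y)‖ ^ 2 ≤ (f (star x * x)).re * (f (star y * y)).re := by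
  have hx : 0 ≤ (f (star x * x)).re := (f.map_nonneg (star_mul_self_nonneg x)).1
  have hy : 0 ≤ (f (star y * y)).re := (f.map_nonneg (star_mul_self_nonneg y)).1
  have h : ‖f (star x * y)‖ ≤ √(f (star x * x)).re * √(f (star y * y)).re :=
    norm_inner_le_norm (𝕜 := ℂ) (f.toPreGNS x) (f.toPreGNS y)
  calc ‖f (star x * y)‖ ^ 2 ≤ (√(f (star x * x)).re * √(f (star y * y)).re) ^ 2 := by gcongr
    _ = (f (star x * x)).re * (f (star y * y)).re := by
      rw [mul_pow, Real.sq_sqrt hx, Real.sq_sqrt hy]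

section PositiveFunctional

open scoped Ring

variable {A : Type*} [CStarAlgebra A] [PartialOrder A] [StarOrderedRing A]

theorem norm_sq_apply_le_mul_of_isStrictlyPositive (f : A →ₚ[ℂ] ℂ) (w : A) {e : A}
    (he : IsStrictlyPositive e) : ‖f w‖ ^ 2 ≤ (f (w * e⁻¹ʳ * star w)).re * (f e).re := by
  set s := CFC.sqrt e
  set t := CFC.sqrt e⁻¹ʳ
  have hs : star s = s := (CFC.sqrt_nonneg e).star_eq
  have ht : star t = t := (CFC.sqrt_nonneg e⁻¹ʳ).star_eq
  have hss : s * s = e := CFC.sqrt_mul_sqrt_self e he.nonneg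
  have htt : t * t = e⁻¹ʳ := CFC.sqrt_mul_sqrt_self _ he.ringInverse.nonneg
  have hts : t * s = 1 := by
    rw [show t = s⁻¹ʳ from CFC.sqrt_ringInverse, Ring.inverse_mul_cancel _ (he.isUnit_cfcSqrt e)]
  have hw : star (t * star w) * s = w := by
    rw [star_mul, star_star, ht, mul_assoc, hts, mul_one]
  have hww : star (t * star w) * (t * star w) = w * e⁻¹ʳ * star w := by
    rw [star_mul, star_star, ht, ← htt]
    simp only [mul_assoc]
  simpa only [hw, hww, hs, hss] using norm_sq_apply_star_mul_le f (t * star w) s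

theorem norm_apply_le_of_star_mul_self_eq {f : A →ₚ[ℂ] ℂ} (hf : ∀ x y, f (x * y) = f (y * x))
    {w a : A} (ha : IsStrictlyPositive a) (h : star w * w = a * a) : ‖f w‖ ≤ (f a).re := by
  have hw : f (w * a⁻¹ʳ * star w) = f a := by
    rw [mul_assoc, hf, mul_assoc, h, Ring.inverse_mul_cancel_left _ _ ha.isUnit]
  have hsq := norm_sq_apply_le_mul_of_isStrictlyPositive f w ha
  rw [hw, ← sq] at hsq
  exact (sq_le_sq₀ (norm_nonneg _) (f.map_nonneg ha.nonneg).1).mp hsq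

theorem cStarAbs_mul_cStarAbs (z : A) : CStarAbs z * CStarAbs z = star z * z :=
  CFC.abs_mul_abs z

theorem norm_sq_apply_sqrt_cStarAbs_mul_le_of_isStrictlyPositive {f : A →ₚ[ℂ] ℂ}
    (hf : ∀ x y, f (x * y) = f (y * x)) {a b : A} (ha : IsStrictlyPositive a)
    (hb : IsStrictlyPositive b) :
    ‖f (CFC.sqrt (CStarAbs (a * b)))‖ ^ 2 ≤ (f a).re * (f b).re := by
  set p := CStarAbs (a * b)
  set k := CFC.sqrt p
  have hp : 0 ≤ p := CFC.sqrt_nonneg _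
  have hk : star k = k := (CFC.sqrt_nonneg p).star_eq
  have hkk : k * k = p := CFC.sqrt_mul_sqrt_self p hp
  have hpp : p * p = b * a * (a * b) := by
    rw [cStarAbs_mul_cStarAbs, star_mul, ha.nonneg.star_eq, hb.nonneg.star_eq]
  have hw : star (p * b⁻¹ʳ) * (p * b⁻¹ʳ) = a * a := by
    calc star (p * b⁻¹ʳ) * (p * b⁻¹ʳ) = b⁻¹ʳ * (p * p) * b⁻¹ʳ := by
          rw [star_mul, hp.star_eq, hb.ringInverse.nonneg.star_eq]
          simp only [mul_assoc]
      _ = (b⁻¹ʳ * b) * (a * a) * (b * b⁻¹ʳ) := by rw [hpp]; simp only [mul_assoc]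
      _ = a * a := by
          rw [Ring.inverse_mul_cancel _ hb.isUnit, Ring.mul_inverse_cancel _ hb.isUnit, one_mul,
            mul_one]
  have hb₀ : 0 ≤ (f b).re := (f.map_nonneg hb.nonneg).1
  calc ‖f k‖ ^ 2 ≤ (f (k * b⁻¹ʳ * star k)).re * (f b).re :=
        norm_sq_apply_le_mul_of_isStrictlyPositive f k hb
    _ = (f (p * b⁻¹ʳ)).re * (f b).re := by rw [hk, hf, ← mul_assoc, hkk]
    _ ≤ ‖f (p * b⁻¹ʳ)‖ * (f b).re := by gcongr; exact Complex.re_le_norm _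
    _ ≤ (f a).re * (f b).re := by gcongr; exact norm_apply_le_of_star_mul_self_eq hf ha hw

theorem continuous_cStarAbs : Continuous (CStarAbs : A → A) :=
  CFC.continuousOn_sqrt.comp_continuous (by fun_prop) star_mul_self_nonneg

theorem continuous_sqrt_cStarAbs : Continuous fun z : A ↦ CFC.sqrt (CStarAbs z) :=
  CFC.continuousOn_sqrt.comp_continuous continuous_cStarAbs fun _ ↦ CFC.sqrt_nonneg _

theorem norm_sq_apply_sqrt_cStarAbs_mul_le {f : A →ₚ[ℂ] ℂ} (hf : ∀ x y, f (x * y) = f (y * x))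
    {a b : A} (ha : 0 ≤ a) (hb : 0 ≤ b) :
    ‖f (CFC.sqrt (CStarAbs (a * b)))‖ ^ 2 ≤ (f a).re * (f b).re := by
  have hf_cont : Continuous f := map_continuous f
  let shift (c : A) (ε : ℝ) : A := c + algebraMap ℝ A ε
  have hshift (c : A) : Continuous (shift c) := (continuous_algebraMap ℝ A).const_add c
  have hlhs : Continuous fun ε ↦ ‖f (CFC.sqrt (CStarAbs (shift a ε * shift b ε)))‖ ^ 2 :=
    (hf_cont.comp (continuous_sqrt_cStarAbs.comp ((hshift a).mul (hshift b)))).norm.pow 2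
  have hrhs : Continuous fun ε ↦ (f (shift a ε)).re * (f (shift b ε)).re :=
    (Complex.continuous_re.comp (hf_cont.comp (hshift a))).mul
      (Complex.continuous_re.comp (hf_cont.comp (hshift b)))
  have hle : ∀ ε ∈ Set.Ioi (0 : ℝ), ‖f (CFC.sqrt (CStarAbs (shift a ε * shift b ε)))‖ ^ 2 ≤
      (f (shift a ε)).re * (f (shift b ε)).re := fun ε hε ↦
    norm_sq_apply_sqrt_cStarAbs_mul_le_of_isStrictlyPositive hf
      ((isStrictlyPositive_algebraMap hε).nonneg_add ha)
      ((isStrictlyPositive_algebraMap hε).nonneg_add hb)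
  have h₀ : (0 : ℝ) ∈ closure (Set.Ioi 0) := by simp
  simpa [shift] using le_on_closure hle hlhs.continuousOn hrhs.continuousOn h₀

end PositiveFunctional

theorem cpow_half_mul_of_nonneg {x y : ℂ} (hx : 0 ≤ x) (hy : 0 ≤ y) :
    (x * y) ^ ((1 : ℂ) / 2) = (√(x.re * y.re) : ℝ) := by
  lift x to ℝ using hx.2.symm
  lift y to ℝ using hy.2.symm
  have hxy : 0 ≤ x * y := mul_nonneg (by exact_mod_cast hx) (by exact_mod_cast hy)
  simp [Real.sqrt_eq_rpow, Complex.ofReal_cpow hxy]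

theorem cpow_half_mul_le_half_add {x y : ℂ} (hx : 0 ≤ x) (hy : 0 ≤ y) :
    (x * y) ^ ((1 : ℂ) / 2) ≤ (1 / 2 : ℂ) * (x + y) := by
  rw [cpow_half_mul_of_nonneg hx hy]
  lift x to ℝ using hx.2.symm
  lift y to ℝ using hy.2.symm
  have hx₀ : 0 ≤ x := by exact_mod_cast hx
  have hy₀ : 0 ≤ y := by exact_mod_cast hy
  have amgm : √(x * y) ≤ 1 / 2 * (x + y) :=
    Real.sqrt_le_iff.mpr ⟨by positivity, by nlinarith [sq_nonneg (x - y)]⟩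
  exact (Complex.real_le_real.mpr amgm).trans_eq (by push_cast; rfl)

theorem tracial_am_gm_general {A : Type*} [CStarAlgebra A] [PartialOrder A] [StarOrderedRing A]
    (f : A →ₚ[ℂ] ℂ) (hf : ∀ x y, f (x * y) = f (y * x)) {a b : A} (ha : 0 ≤ a) (hb : 0 ≤ b) :
    f (CStarAbs (a * b) ^ ((1 : ℝ) / 2)) ≤ (f a * f b) ^ ((1 : ℂ) / 2) ∧
      (f a * f b) ^ ((1 : ℂ) / 2) ≤ (1 / 2 : ℂ) * (f a + f b) := by
  refine ⟨?_, cpow_half_mul_le_half_add (f.map_nonneg ha) (f.map_nonneg hb)⟩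
  have hk : 0 ≤ f (CFC.sqrt (CStarAbs (a * b))) := f.map_nonneg (CFC.sqrt_nonneg _)
  rw [← CFC.sqrt_eq_rpow, cpow_half_mul_of_nonneg (f.map_nonneg ha) (f.map_nonneg hb),
    Complex.eq_coe_norm_of_nonneg hk]
  exact_mod_cast Real.le_sqrt_of_sq_le (norm_sq_apply_sqrt_cStarAbs_mul_le hf ha hb)

/-- **Tracial arithmetic–geometric mean inequality in a C*-algebra.** -/
theorem tracial_am_gm {A : Type*} [CStarAlgebra A] [PartialOrder A] [StarOrderedRing A]
    (τ : A →ₗ[ℂ] ℂ) (hτ1 : τ 1 = 1)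
    (hτpos : ∀ a : A, 0 ≤ a → 0 ≤ τ a)
    (hτtr : ∀ x y : A, τ (x * y) = τ (y * x))
    (a b : A) (ha : 0 ≤ a) (hb : 0 ≤ b) :
    τ (CStarAbs (a * b) ^ ((1 : ℝ) / 2)) ≤ (τ a * τ b) ^ ((1 : ℂ) / 2) ∧
      (τ a * τ b) ^ ((1 : ℂ) / 2) ≤ (1 / 2 : ℂ) * (τ a + τ b) :=
  tracial_am_gm_general (PositiveLinearMap.mk₀ τ hτpos) hτtr ha hb
end

section
/- Let A be a unital C*-algebra carrying a tracial state τ, and let p, q be positive real numbers with 1/p + 1/q = 1. Then for all x, y ∈ A and every choice of x† ∈ {x, x*, |x|, |x*|} and y† ∈ {y, y*, |y|, |y*|}, one has τ(|x† y†|) ≤ p⁻¹ τ(|x|ᵖ) + q⁻¹ τ(|y|^q). -/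
open scoped ComplexOrder

/-!
Since `τ((x*x)ⁿ) = τ((xx*)ⁿ)`, the Weierstrass theorem gives `τ(|x*|ᵖ) = τ(|x|ᵖ)`, so it suffices
to bound `τ|xy| = τ| |x| |y*| |`. An approximate polar decomposition bounds `τ|z|` by the supremum
of `Re τ(wz)` over contractions `w`, and Cauchy–Schwarz bounds `Re τ(wab)` for `a, b ≥ 0` by the
mean of `τ(w a w* b)` and `τ(ab)`. Finally `(s, t) ↦ τ(w aˢ w* bᵗ)` is midpoint convex, again by
Cauchy–Schwarz, and locally bounded, hence convex. Evaluating it at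
`(1, 1) = p⁻¹ (p, 0) + q⁻¹ (0, q)` gives Young's inequality for `τ(w a w* b)`.
-/

open Filter Topology

section Convexity

lemma nonpos_of_map_midpoint_le {f : ℝ → ℝ} (hbdd : BddAbove (f '' Set.Icc 0 1))
    (h0 : f 0 ≤ 0) (h1 : f 1 ≤ 0)
    (hmid : ∀ s ∈ Set.Icc (0 : ℝ) 1, ∀ t ∈ Set.Icc (0 : ℝ) 1,
      f (midpoint ℝ s t) ≤ midpoint ℝ (f s) (f t)) {t : ℝ} (ht : t ∈ Set.Icc 0 1) :
    f t ≤ 0 := by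
  set M := sSup (f '' Set.Icc 0 1)
  have le_M : ∀ s ∈ Set.Icc (0 : ℝ) 1, f s ≤ M := fun s hs ↦
    le_csSup hbdd (Set.mem_image_of_mem f hs)
  simp only [midpoint_eq_smul_add, invOf_eq_inv, smul_eq_mul] at hmid
  -- Every point of `[0, 1]` is halfway between an endpoint and another point of `[0, 1]`.
  have le_half : ∀ s ∈ Set.Icc (0 : ℝ) 1, f s ≤ M / 2 := by
    rintro s ⟨hs0, hs1⟩
    rcases le_total s (1 / 2) with h | h
    · have hs : 2 * s ∈ Set.Icc (0 : ℝ) 1 := ⟨by linarith, by linarith⟩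
      have := hmid 0 (by simp) (2 * s) hs
      rw [show 2⁻¹ * (0 + 2 * s) = s by ring] at this
      linarith [le_M _ hs]
    · have hs : 2 * s - 1 ∈ Set.Icc (0 : ℝ) 1 := ⟨by linarith, by linarith⟩
      have := hmid 1 (by simp) (2 * s - 1) hs
      rw [show 2⁻¹ * (1 + (2 * s - 1)) = s by ring] at this
      linarith [le_M _ hs]
  have M_le_half : M ≤ M / 2 :=
    csSup_le (Set.nonempty_Icc.2 zero_le_one |>.image f) (Set.forall_mem_image.2 le_half)
  linarith [le_M t ht]

lemma convexOn_of_map_midpoint_le {E : Type*} [AddCommGroup E] [Module ℝ E] {s : Set E}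
    {f : E → ℝ} (hs : Convex ℝ s)
    (hbdd : ∀ x ∈ s, ∀ y ∈ s, BddAbove (f '' segment ℝ x y))
    (hmid : ∀ x ∈ s, ∀ y ∈ s, f (midpoint ℝ x y) ≤ midpoint ℝ (f x) (f y)) :
    ConvexOn ℝ s f := by
  refine convexOn_iff_forall_pos.2 ⟨hs, fun x hx y hy a b ha hb hab ↦ ?_⟩
  let γ : ℝ →ᵃ[ℝ] E := AffineMap.lineMap x y
  let chord : ℝ →ᵃ[ℝ] ℝ := AffineMap.lineMap (f x) (f y)
  have γ_mem : ∀ t ∈ Set.Icc (0 : ℝ) 1, γ t ∈ s := fun t ht ↦ hs.lineMap_mem hx hy ht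
  suffices f (γ b) - chord b ≤ 0 by
    rw [sub_nonpos] at this
    simpa [γ, chord, AffineMap.lineMap_apply_module, ← eq_sub_of_add_eq hab] using this
  refine nonpos_of_map_midpoint_le (f := fun t ↦ f (γ t) - chord t) ?_ (by simp [γ, chord])
    (by simp [γ, chord]) (fun t ht u hu ↦ ?_) ⟨hb.le, by linarith⟩
  · obtain ⟨M, hM⟩ := hbdd x hx y hy
    obtain ⟨m, hm⟩ := (isCompact_Icc (a := (0 : ℝ)) (b := 1)).bddBelow_image
      (f := chord) AffineMap.lineMap_continuous.continuousOn
    refine ⟨M - m, Set.forall_mem_image.2 fun t ht ↦ sub_le_sub (hM ?_) (hm ?_)⟩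
    · rw [segment_eq_image_lineMap]
      exact Set.mem_image_of_mem f (Set.mem_image_of_mem γ ht)
    · exact Set.mem_image_of_mem chord ht
  · have := hmid _ (γ_mem t ht) _ (γ_mem u hu)
    simp only [AffineMap.map_midpoint]
    simp only [midpoint_eq_smul_add, invOf_eq_inv, smul_eq_mul] at this ⊢
    linarith

end Convexity

section FunctionalCalculus

lemma exists_tendstoUniformlyOn_polynomial_eval {K : Set ℝ} (hK : IsCompact K) {f : ℝ → ℝ}
    (hf : ContinuousOn f K) :
    ∃ P : ℕ → Polynomial ℝ, TendstoUniformlyOn (fun n t ↦ (P n).eval t) f atTop K := by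
  have : CompactSpace K := isCompact_iff_compactSpace.1 hK
  have near (n : ℕ) : ∃ P : Polynomial ℝ, ∀ t ∈ K, |P.eval t - f t| < 1 / ((n : ℝ) + 1) := by
    obtain ⟨⟨_, P, _, rfl⟩, hP⟩ :=
      ContinuousMap.exists_mem_subalgebra_near_continuous_of_separatesPoints
        (polynomialFunctions K) (polynomialFunctions_separatesPoints K) (K.domRestrict f)
        hf.domRestrict (1 / ((n : ℝ) + 1)) Nat.one_div_pos_of_nat
    exact ⟨P, fun t ht ↦ hP ⟨t, ht⟩⟩
  choose P hP using near
  refine ⟨P, Metric.tendstoUniformlyOn_iff.2 fun ε hε ↦ ?_⟩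
  filter_upwards [tendsto_one_div_add_atTop_nhds_zero_nat.eventually_lt_const hε] with n hn t ht
  rw [dist_comm, Real.dist_eq]
  exact (hP n t ht).trans hn

variable {A : Type*} [CStarAlgebra A]

lemma map_cfc_eq_of_forall_map_pow_eq {E : Type*} [AddCommGroup E] [Module ℝ E]
    [TopologicalSpace E] [T2Space E] (φ : A →L[ℝ] E) {a b : A} (ha : IsSelfAdjoint a)
    (hb : IsSelfAdjoint b) (hpow : ∀ n : ℕ, φ (a ^ n) = φ (b ^ n)) {f : ℝ → ℝ}
    (hf : ContinuousOn f (spectrum ℝ a ∪ spectrum ℝ b)) :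
    φ (cfc f a) = φ (cfc f b) := by
  obtain ⟨P, hP⟩ := exists_tendstoUniformlyOn_polynomial_eval
    ((ContinuousFunctionalCalculus.isCompact_spectrum a).union
      (ContinuousFunctionalCalculus.isCompact_spectrum b)) hf
  have tendsto_map {c : A} (hc : IsSelfAdjoint c)
      (hP : TendstoUniformlyOn (fun n t ↦ (P n).eval t) f atTop (spectrum ℝ c)) :
      Tendsto (fun n ↦ φ ((P n).aeval c)) atTop (𝓝 (φ (cfc f c))) := by
    refine (φ.continuous.tendsto _).comp ?_
    simp only [← cfc_polynomial _ c hc]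
    exact tendsto_cfc_fun hP (.of_forall fun n ↦ (P n).continuous.continuousOn)
  have map_aeval (n : ℕ) : φ ((P n).aeval a) = φ ((P n).aeval b) := by
    simp only [Polynomial.aeval_eq_sum_range, map_sum, map_smul, hpow]
  refine tendsto_nhds_unique (tendsto_map ha (hP.mono Set.subset_union_left)) ?_
  simpa only [map_aeval] using tendsto_map hb (hP.mono Set.subset_union_right)

variable [PartialOrder A] [StarOrderedRing A]

lemma cfcRpow_add_of_nonneg {a : A} {s t : ℝ} (hs : 0 ≤ s) (ht : 0 ≤ t) :
    a ^ (s + t) = a ^ s * a ^ t := by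
  simp only [CFC.rpow_def]
  rw [← cfc_mul _ _ a (by fun_prop (disch := assumption)) (by fun_prop (disch := assumption))]
  exact cfc_congr fun r _ ↦ NNReal.rpow_add_of_nonneg r hs ht

lemma norm_cfcRpow_le_one_add_norm_rpow {a : A} (ha : 0 ≤ a) {s : ℝ} (hs : 0 ≤ s) :
    ‖a ^ s‖ ≤ (1 + ‖a‖) ^ s := by
  rcases hs.eq_or_lt with rfl | hs
  · nontriviality A
    simp [CFC.rpow_zero a ha]
  · rw [CFC.norm_rpow a hs]
    gcongr
    linarith

lemma cfcAbs_mul_eq_cfcAbs_cfcAbs_mul (x y : A) : CFC.abs (x * y) = CFC.abs (CFC.abs x * y) := by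
  have : star (CFC.abs x * y) * (CFC.abs x * y) = star (x * y) * (x * y) := by
    simp only [star_mul, (CFC.abs_nonneg x).star_eq]
    calc star y * CFC.abs x * (CFC.abs x * y) = star y * (CFC.abs x * CFC.abs x) * y := by
          noncomm_ring
      _ = star y * star x * (x * y) := by rw [CFC.abs_mul_abs]; noncomm_ring
  rw [CFC.abs, CFC.abs, this]

lemma cfcAbs_rpow (z : A) {p : ℝ} (hp : 0 ≤ p) :
    CFC.abs z ^ p = cfc (fun t : ℝ ↦ t ^ (p / 2)) (star z * z) := by
  lift p to NNReal using hp
  rw [CFC.abs, CFC.rpow_sqrt_nnreal, CFC.rpow_eq_cfc_real]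

-- An approximate polar decomposition: `w = (|z| + ε)⁻¹ z*`.
lemma exists_norm_le_one_and_cfcAbs_le_mul_add (z : A) {ε : ℝ} (hε : 0 < ε) :
    ∃ w : A, ‖w‖ ≤ 1 ∧ CFC.abs z ≤ w * z + algebraMap ℝ A ε := by
  set h := CFC.abs z
  have spec_nonneg : ∀ t ∈ spectrum ℝ h, 0 ≤ t := fun t ht ↦
    spectrum_nonneg_of_nonneg (CFC.abs_nonneg z) ht
  have hcont : ContinuousOn (fun t : ℝ ↦ (t + ε)⁻¹) (spectrum ℝ h) :=
    ContinuousOn.inv₀ (by fun_prop) fun t ht ↦ by linarith [spec_nonneg t ht]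
  set k : A := cfc (fun t : ℝ ↦ (t + ε)⁻¹) h
  have star_k : star k = k := (cfc_predicate _ h : IsSelfAdjoint k).star_eq
  have sq_eq : cfc (fun t : ℝ ↦ t * t) h = star z * z := by
    rw [cfc_mul _ _ h, cfc_id' ℝ h, CFC.abs_mul_abs]
  have mul_eq : cfc (fun t : ℝ ↦ (t + ε)⁻¹ * (t * t)) h = k * star z * z := by
    rw [cfc_mul _ _ h hcont, sq_eq, mul_assoc]
  refine ⟨k * star z, ?_, ?_⟩
  · have norm_eq : k * star z * star (k * star z)
        = cfc (fun t : ℝ ↦ (t + ε)⁻¹ * (t * t) * (t + ε)⁻¹) h := by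
      rw [cfc_mul _ _ h (by fun_prop) hcont, mul_eq, star_mul, star_star, star_k]
      simp only [mul_assoc, k]
    rw [← sq_le_one_iff₀ (norm_nonneg _), sq, ← CStarRing.norm_self_mul_star, norm_eq]
    refine norm_cfc_le zero_le_one fun t ht ↦ ?_
    have := spec_nonneg t ht
    rw [Real.norm_of_nonneg (by positivity)]
    have : t / (t + ε) ≤ 1 := div_le_one_of_le₀ (by linarith) (by positivity)
    calc (t + ε)⁻¹ * (t * t) * (t + ε)⁻¹ = (t / (t + ε)) ^ 2 := by ring
      _ ≤ 1 := pow_le_one₀ (by positivity) this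
  · rw [← mul_eq, ← cfc_const ε h, ← cfc_add h _ _ (by fun_prop) (by fun_prop)]
    conv_lhs => rw [← cfc_id' ℝ h]
    refine cfc_mono (fun t ht ↦ ?_) (by fun_prop) (by fun_prop)
    have := spec_nonneg t ht
    rw [inv_mul_eq_div, ← sub_le_iff_le_add, le_div_iff₀ (by positivity)]
    nlinarith [sq_nonneg ε]

end FunctionalCalculus

section PositiveFunctional

variable {A : Type*} [CStarAlgebra A] [PartialOrder A] (τ : A →ₚ[ℂ] ℂ)

lemma ofReal_re_map_of_nonneg_s4 {a : A} (ha : 0 ≤ a) : ((τ a).re : ℂ) = τ a :=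
  Complex.ext rfl (Complex.nonneg_iff.1 (map_nonneg τ ha)).2

lemma re_map_mono {a b : A} (hab : a ≤ b) : (τ a).re ≤ (τ b).re :=
  (Complex.le_def.1 (OrderHomClass.mono τ hab)).1

variable [StarOrderedRing A]

lemma re_map_mul_le_midpoint (u v : A) :
    (τ (u * v)).re ≤ midpoint ℝ (τ (u * star u)).re (τ (star v * v)).re := by
  have expand : star (star u - v) * (star u - v)
      = u * star u - u * v - star (u * v) + star v * v := by
    simp only [star_sub, star_star, star_mul]
    noncomm_ring
  have := re_map_mono τ (star_mul_self_nonneg (star u - v))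
  simp only [expand, map_zero, map_add, map_sub, map_star, Complex.zero_re, Complex.add_re,
    Complex.sub_re, Complex.star_def, Complex.conj_re] at this
  simp only [midpoint_eq_smul_add, invOf_eq_inv, smul_eq_mul]
  linarith

lemma re_map_cfcAbs_le_of_forall_norm_le_one {z : A} {M : ℝ}
    (hM : ∀ w : A, ‖w‖ ≤ 1 → (τ (w * z)).re ≤ M) : (τ (CFC.abs z)).re ≤ M := by
  have le_add : ∀ ε > 0, (τ (CFC.abs z)).re ≤ M + ε * (τ 1).re := fun ε hε ↦ by
    obtain ⟨w, hw, hwz⟩ := exists_norm_le_one_and_cfcAbs_le_mul_add z hε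
    have := re_map_mono τ hwz
    rw [map_add, Algebra.algebraMap_eq_smul_one, ← Complex.coe_smul, map_smul, Complex.add_re,
      smul_eq_mul, Complex.re_ofReal_mul] at this
    linarith [hM w hw]
  have lim : Tendsto (fun ε : ℝ ↦ M + ε * (τ 1).re) (𝓝[>] 0) (𝓝 M) :=
    tendsto_nhdsWithin_of_tendsto_nhds (Continuous.tendsto' (by fun_prop) _ _ (by simp))
  exact ge_of_tendsto lim (eventually_mem_nhdsWithin.mono le_add)

end PositiveFunctional

/-- A map `τ` is tracial if it does not distinguish `x * y` from `y * x`. Neither linearity nor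
positivity is part of the notion; a tracial state is a positive linear functional for which this
holds. -/
def IsTracial {A M : Type*} [Mul A] (τ : A → M) : Prop := ∀ x y, τ (x * y) = τ (y * x)

namespace IsTracial

lemma map_mul_pow {A M : Type*} [Monoid A] {τ : A → M} (hτ : IsTracial τ) (x y : A) (n : ℕ) :
    τ ((x * y) ^ n) = τ ((y * x) ^ n) := by
  cases n with
  | zero => simp only [pow_zero]
  | succ n => rw [pow_succ, ← mul_assoc, mul_pow_mul, mul_assoc, hτ, mul_assoc, ← pow_succ]

variable {A : Type*} [CStarAlgebra A] [PartialOrder A] [StarOrderedRing A] {τ : A →ₚ[ℂ] ℂ}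

lemma map_cfc_star_mul_self (hτ : IsTracial τ) (x : A) {f : ℝ → ℝ}
    (hf : ContinuousOn f (spectrum ℝ (star x * x) ∪ spectrum ℝ (x * star x))) :
    τ (cfc f (star x * x)) = τ (cfc f (x * star x)) :=
  map_cfc_eq_of_forall_map_pow_eq
    ((⟨τ, map_continuous τ⟩ : A →L[ℂ] ℂ).restrictScalars ℝ) (.star_mul_self x)
    (.mul_star_self x) (hτ.map_mul_pow _ _) hf

lemma map_cfcAbs_star_rpow (hτ : IsTracial τ) (x : A) {p : ℝ} (hp : 0 ≤ p) :
    τ (CFC.abs (star x) ^ p) = τ (CFC.abs x ^ p) := by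
  rw [cfcAbs_rpow _ hp, cfcAbs_rpow _ hp, star_star]
  exact (hτ.map_cfc_star_mul_self x (Real.continuous_rpow_const (by positivity)).continuousOn).symm

lemma map_cfcAbs_star (hτ : IsTracial τ) (x : A) : τ (CFC.abs (star x)) = τ (CFC.abs x) := by
  simpa only [CFC.rpow_one (CFC.abs (star x)), CFC.rpow_one (CFC.abs x)] using
    hτ.map_cfcAbs_star_rpow x zero_le_one

lemma map_cfcAbs_rpow_of_variant (hτ : IsTracial τ) {x x' : A}
    (hx' : x' = x ∨ x' = star x ∨ x' = CFC.abs x ∨ x' = CFC.abs (star x)) {p : ℝ} (hp : 0 ≤ p) :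
    τ (CFC.abs x' ^ p) = τ (CFC.abs x ^ p) := by
  rcases hx' with rfl | rfl | rfl | rfl
  · rfl
  · exact hτ.map_cfcAbs_star_rpow x hp
  · rw [CFC.cfcAbs_cfcAbs]
  · rw [CFC.cfcAbs_cfcAbs, hτ.map_cfcAbs_star_rpow x hp]

lemma map_cfcAbs_mul_eq_map_cfcAbs_mul_cfcAbs (hτ : IsTracial τ) (x y : A) :
    τ (CFC.abs (x * y)) = τ (CFC.abs (CFC.abs x * CFC.abs (star y))) := by
  calc τ (CFC.abs (x * y)) = τ (CFC.abs (star y * CFC.abs x)) := by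
        rw [cfcAbs_mul_eq_cfcAbs_cfcAbs_mul, ← hτ.map_cfcAbs_star, star_mul,
          (CFC.abs_nonneg x).star_eq]
    _ = τ (CFC.abs (CFC.abs x * CFC.abs (star y))) := by
        rw [cfcAbs_mul_eq_cfcAbs_cfcAbs_mul, ← hτ.map_cfcAbs_star, star_mul,
          (CFC.abs_nonneg _).star_eq, (CFC.abs_nonneg _).star_eq]

lemma re_map_conjugate_le (hτ : IsTracial τ) (w : A) {c : A} (hc : 0 ≤ c) :
    (τ (w * c * star w)).re ≤ ‖w‖ ^ 2 * (τ c).re := by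
  set r := CFC.sqrt c
  have r_mul_r : r * r = c := CFC.sqrt_mul_sqrt_self c
  have star_r : star r = r := (CFC.sqrt_nonneg c).star_eq
  have conj_le : r * (star w * w) * r ≤ ‖w‖ ^ 2 • c := by
    have := CStarAlgebra.star_left_conjugate_le_norm_smul (a := r)
      (.star_mul_self w)
    rwa [star_r, r_mul_r, CStarRing.norm_star_mul_self, ← sq] at this
  calc (τ (w * c * star w)).re = (τ (r * (star w * w) * r)).re := by
        rw [← r_mul_r, ← mul_assoc w, mul_assoc (w * r), hτ]
        simp only [mul_assoc]
    _ ≤ (τ (‖w‖ ^ 2 • c)).re := re_map_mono τ conj_le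
    _ = ‖w‖ ^ 2 * (τ c).re := by
        rw [← Complex.coe_smul, map_smul, smul_eq_mul, Complex.re_ofReal_mul]

-- Apply `2 Re τ(uv) ≤ τ(uu*) + τ(v*v)` to `u = d₁ w c₁` and `v = c₂ v* d₂`.
lemma re_map_mul_conjugate_le_midpoint (hτ : IsTracial τ) {c₁ c₂ d₁ d₂ : A}
    (hc₁ : IsSelfAdjoint c₁) (hc₂ : IsSelfAdjoint c₂) (hd₁ : IsSelfAdjoint d₁)
    (hd₂ : IsSelfAdjoint d₂) (w v : A) :
    (τ (w * (c₁ * c₂) * star v * (d₂ * d₁))).re ≤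
      midpoint ℝ (τ (w * (c₁ * c₁) * star w * (d₁ * d₁))).re
        (τ (v * (c₂ * c₂) * star v * (d₂ * d₂))).re := by
  have cycle (x d e : A) : τ (x * (d * e)) = τ (e * (x * d)) := by rw [← mul_assoc, hτ]
  have := re_map_mul_le_midpoint τ (d₁ * w * c₁) (c₂ * star v * d₂)
  rw [cycle _ d₂ d₁, cycle _ d₁ d₁, cycle _ d₂ d₂]
  simpa only [star_mul, star_star, hc₁.star_eq, hc₂.star_eq, hd₁.star_eq, hd₂.star_eq,
    mul_assoc] using this

lemma convexOn_re_map_rpow_conjugate_mul_rpow (hτ : IsTracial τ) (w : A) {a b : A} (ha : 0 ≤ a)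
    (hb : 0 ≤ b) :
    ConvexOn ℝ (Set.Ici 0) fun s : ℝ × ℝ ↦ (τ (w * a ^ s.1 * star w * b ^ s.2)).re := by
  have rpow_midpoint (c : A) {s t : ℝ} (hs : 0 ≤ s) (ht : 0 ≤ t) :
      c ^ midpoint ℝ s t = c ^ (s / 2) * c ^ (t / 2) := by
    rw [← cfcRpow_add_of_nonneg (by positivity) (by positivity), midpoint_eq_smul_add,
      invOf_eq_inv, smul_eq_mul]
    ring_nf
  have rpow_half_mul_self (c : A) {s : ℝ} (hs : 0 ≤ s) : c ^ (s / 2) * c ^ (s / 2) = c ^ s := by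
    rw [← rpow_midpoint c hs hs, midpoint_self]
  refine convexOn_of_map_midpoint_le (convex_Ici 0) (fun s hs t ht ↦ ?_) ?_
  · have segment_subset : segment ℝ s t ⊆ Set.Ici 0 := (convex_Ici 0).segment_subset hs ht
    have segment_compact : IsCompact (segment ℝ s t) := by
      rw [segment_eq_image_lineMap]
      exact isCompact_Icc.image AffineMap.lineMap_continuous
    obtain ⟨C, hC⟩ := τ.exists_norm_apply_le
    have bound_continuous : Continuous fun u : ℝ × ℝ ↦
        C * (‖w‖ * (1 + ‖a‖) ^ u.1 * ‖w‖ * (1 + ‖b‖) ^ u.2) := by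
      fun_prop (disch := positivity)
    obtain ⟨M, hM⟩ := segment_compact.bddAbove_image bound_continuous.continuousOn
    refine ⟨M, Set.forall_mem_image.2 fun u hu ↦ le_trans ?_ (hM (Set.mem_image_of_mem _ hu))⟩
    obtain ⟨hu₁, hu₂⟩ := segment_subset hu
    calc (τ (w * a ^ u.1 * star w * b ^ u.2)).re
        ≤ C * ‖w * a ^ u.1 * star w * b ^ u.2‖ := (Complex.re_le_norm _).trans (hC _)
      _ ≤ C * (‖w‖ * ‖a ^ u.1‖ * ‖w‖ * ‖b ^ u.2‖) := by
        grw [norm_mul_le, norm_mul_le, norm_mul_le, norm_star]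
      _ ≤ C * (‖w‖ * (1 + ‖a‖) ^ u.1 * ‖w‖ * (1 + ‖b‖) ^ u.2) := by
        grw [norm_cfcRpow_le_one_add_norm_rpow ha hu₁, norm_cfcRpow_le_one_add_norm_rpow hb hu₂]
  · rintro ⟨s₁, s₂⟩ ⟨hs₁ : 0 ≤ s₁, hs₂ : 0 ≤ s₂⟩ ⟨t₁, t₂⟩ ⟨ht₁ : 0 ≤ t₁, ht₂ : 0 ≤ t₂⟩
    have := hτ.re_map_mul_conjugate_le_midpoint (c₁ := a ^ (s₁ / 2)) (c₂ := a ^ (t₁ / 2))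
      (d₁ := b ^ (s₂ / 2)) (d₂ := b ^ (t₂ / 2)) (.of_nonneg CFC.rpow_nonneg)
      (.of_nonneg CFC.rpow_nonneg) (.of_nonneg CFC.rpow_nonneg) (.of_nonneg CFC.rpow_nonneg) w w
    rwa [← rpow_midpoint a hs₁ ht₁, ← rpow_midpoint b ht₂ hs₂, rpow_half_mul_self a hs₁,
      rpow_half_mul_self b hs₂, rpow_half_mul_self a ht₁, rpow_half_mul_self b ht₂,
      midpoint_comm t₂] at this

lemma re_map_conjugate_mul_le (hτ : IsTracial τ) {p q : ℝ} (hpq : p.HolderConjugate q)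
    {w a b : A} (hw : ‖w‖ ≤ 1) (ha : 0 ≤ a) (hb : 0 ≤ b) :
    (τ (w * a * star w * b)).re ≤ p⁻¹ * (τ (a ^ p)).re + q⁻¹ * (τ (b ^ q)).re := by
  have conjugate_le {v c : A} (hv : ‖v‖ ≤ 1) (hc : 0 ≤ c) :
      (τ (v * c * star v)).re ≤ (τ c).re :=
    (hτ.re_map_conjugate_le v hc).trans <| mul_le_of_le_one_left
      (Complex.nonneg_iff.1 (map_nonneg τ hc)).1 (pow_le_one₀ (norm_nonneg v) hv)
  have left_le : (τ (w * a ^ p * star w * b ^ (0 : ℝ))).re ≤ (τ (a ^ p)).re := by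
    rw [CFC.rpow_zero b, mul_one]
    exact conjugate_le hw CFC.rpow_nonneg
  have right_le : (τ (w * a ^ (0 : ℝ) * star w * b ^ q)).re ≤ (τ (b ^ q)).re := by
    rw [CFC.rpow_zero a, mul_one, mul_assoc, hτ]
    simpa using conjugate_le (v := star w) (by rwa [norm_star]) CFC.rpow_nonneg
  have convex := (hτ.convexOn_re_map_rpow_conjugate_mul_rpow w ha hb).2
    (x := (p, 0)) (y := (0, q)) ⟨hpq.nonneg, le_rfl⟩ ⟨le_rfl, hpq.symm.nonneg⟩
    (inv_nonneg.2 hpq.nonneg) (inv_nonneg.2 hpq.symm.nonneg) hpq.inv_add_inv_eq_one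
  simp only [Prod.fst_add, Prod.snd_add, Prod.smul_fst, Prod.smul_snd, smul_eq_mul, mul_zero,
    add_zero, zero_add, inv_mul_cancel₀ hpq.ne_zero, inv_mul_cancel₀ hpq.symm.ne_zero,
    CFC.rpow_one a, CFC.rpow_one b] at convex
  calc (τ (w * a * star w * b)).re
      ≤ p⁻¹ * (τ (w * a ^ p * star w * b ^ (0 : ℝ))).re
        + q⁻¹ * (τ (w * a ^ (0 : ℝ) * star w * b ^ q)).re := convex
    _ ≤ p⁻¹ * (τ (a ^ p)).re + q⁻¹ * (τ (b ^ q)).re :=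
      add_le_add (mul_le_mul_of_nonneg_left left_le (inv_nonneg.2 hpq.nonneg))
        (mul_le_mul_of_nonneg_left right_le (inv_nonneg.2 hpq.symm.nonneg))

lemma re_map_mul_mul_le (hτ : IsTracial τ) {p q : ℝ} (hpq : p.HolderConjugate q)
    {w a b : A} (hw : ‖w‖ ≤ 1) (ha : 0 ≤ a) (hb : 0 ≤ b) :
    (τ (w * (a * b))).re ≤ p⁻¹ * (τ (a ^ p)).re + q⁻¹ * (τ (b ^ q)).re := by
  have norm_one_le : ‖(1 : A)‖ ≤ 1 := by
    nontriviality A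
    exact norm_one.le
  have split := hτ.re_map_mul_conjugate_le_midpoint (.of_nonneg (CFC.sqrt_nonneg a))
    (.of_nonneg (CFC.sqrt_nonneg a)) (.of_nonneg (CFC.sqrt_nonneg b))
    (.of_nonneg (CFC.sqrt_nonneg b)) w 1
  simp only [CFC.sqrt_mul_sqrt_self, ha, hb, star_one, mul_one, midpoint_eq_smul_add,
    invOf_eq_inv, smul_eq_mul] at split
  have conj_w := hτ.re_map_conjugate_mul_le hpq hw ha hb
  have conj_one := hτ.re_map_conjugate_mul_le hpq norm_one_le ha hb
  rw [star_one, mul_one] at conj_one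
  rw [← mul_assoc]
  linarith

lemma map_cfcAbs_mul_le (hτ : IsTracial τ) {p q : ℝ} (hpq : p.HolderConjugate q) (x y : A) :
    τ (CFC.abs (x * y)) ≤ (p⁻¹ : ℂ) * τ (CFC.abs x ^ p) + (q⁻¹ : ℂ) * τ (CFC.abs y ^ q) := by
  have re_le : (τ (CFC.abs (x * y))).re
      ≤ p⁻¹ * (τ (CFC.abs x ^ p)).re + q⁻¹ * (τ (CFC.abs y ^ q)).re := by
    rw [hτ.map_cfcAbs_mul_eq_map_cfcAbs_mul_cfcAbs, ← hτ.map_cfcAbs_star_rpow y hpq.symm.nonneg]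
    exact re_map_cfcAbs_le_of_forall_norm_le_one τ fun w hw ↦
      hτ.re_map_mul_mul_le hpq hw (CFC.abs_nonneg x) (CFC.abs_nonneg (star y))
  rw [← ofReal_re_map_of_nonneg_s4 τ (CFC.abs_nonneg (x * y)),
    ← ofReal_re_map_of_nonneg_s4 τ (CFC.rpow_nonneg (a := CFC.abs x)),
    ← ofReal_re_map_of_nonneg_s4 τ (CFC.rpow_nonneg (a := CFC.abs y))]
  exact_mod_cast re_le

end IsTracial

theorem tracial_young_inequality_variants_general {A : Type*} [CStarAlgebra A] [PartialOrder A]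
    [StarOrderedRing A] {τ : A →ₚ[ℂ] ℂ} (hτ : IsTracial τ) {p q : ℝ} (hpq : p.HolderConjugate q)
    {x y x' y' : A}
    (hx' : x' = x ∨ x' = star x ∨ x' = CFC.abs x ∨ x' = CFC.abs (star x))
    (hy' : y' = y ∨ y' = star y ∨ y' = CFC.abs y ∨ y' = CFC.abs (star y)) :
    τ (CFC.abs (x' * y')) ≤ (p⁻¹ : ℂ) * τ (CFC.abs x ^ p) + (q⁻¹ : ℂ) * τ (CFC.abs y ^ q) := by
  rw [← hτ.map_cfcAbs_rpow_of_variant hx' hpq.nonneg,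
    ← hτ.map_cfcAbs_rpow_of_variant hy' hpq.symm.nonneg]
  exact hτ.map_cfcAbs_mul_le hpq x' y'

/-- **A tracial Young inequality for all the variants `x† ∈ {x, x*, |x|, |x*|}`.** -/
theorem tracial_young_inequality_variants {A : Type*} [CStarAlgebra A] [PartialOrder A]
    [StarOrderedRing A]
    (τ : A →ₗ[ℂ] ℂ) (hτ1 : τ 1 = 1)
    (hτpos : ∀ a : A, 0 ≤ a → 0 ≤ τ a)
    (hτtr : ∀ x y : A, τ (x * y) = τ (y * x))
    (p q : ℝ) (hp : 0 < p) (hq : 0 < q) (hpq : 1 / p + 1 / q = 1)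
    (x y x' y' : A)
    (hx' : x' = x ∨ x' = star x ∨ x' = CStarAbs x ∨ x' = CStarAbs (star x))
    (hy' : y' = y ∨ y' = star y ∨ y' = CStarAbs y ∨ y' = CStarAbs (star y)) :
    τ (CStarAbs (x' * y')) ≤ (p⁻¹ : ℂ) * τ (CStarAbs x ^ p) + (q⁻¹ : ℂ) * τ (CStarAbs y ^ q) :=
  tracial_young_inequality_variants_general (τ := .mk₀ τ hτpos) hτtr
    ⟨by simpa using hpq, hp, hq⟩ hx' hy'
end

section
/- Let A be a unital C*-algebra carrying a tracial state τ, and let F, G : ℝ → ℝ be continuous functions satisfying the pointwise Fenchel–Young inequality s·t ≤ F(t) + G(s) for all s, t ≥ 0 (for instance, F convex on [0,∞) and G its Fenchel conjugate). Then for all positive elements a, b ∈ A, τ(|ab|) ≤ τ(F(a)) + τ(G(b)), where F(a) and G(b) are defined by the continuous functional calculus. -/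
open scoped ComplexOrder

/-!
The values `τ (star y * x * y * p)`, for a positive trace `τ`, are nonnegative when `x` and `p` are.
A partition of unity on the spectrum of `b` shows that a bilinear map which is nonnegative on pairs
of nonnegative elements respects pointwise inequalities between functions in two variables, so
`τ (y* a y b) ≤ τ (y* F(a) y) + τ (y* y G(b))` for every `y`. If `‖y‖ ≤ 1`, the right-hand side is
at most `C = τ (F(a)) + τ (G(b))`: since `0 ≤ s t ≤ F t + G s`, some constant `c` makes both `F + c`
and `G - c` nonnegative, and `c` cancels. Positivity of `τ ((1 - y)* a (1 - y) b)` then gives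
`2 Re τ (y* a b) ≤ τ (a b) + τ (y* a y b) ≤ 2 C` for every contraction `y`. Taking
`y = z (|z| + ε)⁻¹` with `z = a b` and letting `ε → 0` turns `τ (y* z)` into `τ |z|`.
-/

section PositiveBilinear

theorem exists_norm_sum_smul_sub_lt {X E : Type*} [TopologicalSpace X] [CompactSpace X]
    [T2Space X] [NormedAddCommGroup E] [NormedSpace ℝ E] (g : C(X, E)) {ε : ℝ} (hε : 0 < ε) :
    ∃ (s : Finset X) (ψ : s → C(X, ℝ)), (∀ i, 0 ≤ ψ i) ∧
      ∀ x, ‖∑ i, ψ i x • g i - g x‖ < ε := by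
  let U : X → Set X := fun y ↦ g ⁻¹' Metric.ball (g y) ε
  have hU : ∀ y, IsOpen (U y) := fun y ↦ Metric.isOpen_ball.preimage g.continuous
  obtain ⟨s, hs⟩ := isCompact_univ.elim_finite_subcover U hU
    fun y _ ↦ Set.mem_iUnion.2 ⟨y, Metric.mem_ball_self hε⟩
  obtain ⟨ψ, hψ⟩ := PartitionOfUnity.exists_isSubordinate isClosed_univ (fun i : s ↦ U i)
    (fun i ↦ hU i) (by rwa [Set.iUnion_subtype])
  refine ⟨s, ψ, fun i x ↦ ψ.nonneg i x, fun x ↦ ?_⟩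
  rw [← finsum_eq_sum_of_fintype, ← mem_ball_iff_norm]
  refine ψ.finsum_smul_mem_convex (g := fun i _ ↦ g i) (Set.mem_univ x) (fun i hi ↦ ?_)
    (convex_ball (g x) ε)
  exact Metric.mem_ball_comm.1 (hψ i (subset_tsupport _ hi))

variable {ι V E : Type*} [Fintype ι] [AddCommGroup V] [PartialOrder V] [Module ℝ V]
  [NormedAddCommGroup E] [NormedSpace ℝ E] [PartialOrder E] [IsOrderedAddMonoid E]
  [OrderClosedTopology E]

theorem sum_bilinear_nonneg {X : Type*} [TopologicalSpace X] [CompactSpace X] [T2Space X]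
    (Φ : V →ₗ[ℝ] C(X, ℝ) →L[ℝ] E) (hΦ : ∀ v ψ, 0 ≤ v → 0 ≤ ψ → 0 ≤ Φ v ψ)
    (v : ι → V) (g : ι → C(X, ℝ)) (h : ∀ x, 0 ≤ ∑ i, g i x • v i) :
    0 ≤ ∑ i, Φ (v i) (g i) := by
  have hclosed : IsClosed {f : ι → C(X, ℝ) | 0 ≤ ∑ i, Φ (v i) (f i)} :=
    isClosed_Ici.preimage (by fun_prop : Continuous fun f : ι → C(X, ℝ) ↦ ∑ i, Φ (v i) (f i))
  refine hclosed.closure_subset (Metric.mem_closure_iff.2 fun ε hε ↦ ?_)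
  obtain ⟨s, ψ, hψ, hg⟩ := exists_norm_sum_smul_sub_lt (ContinuousMap.pi g) hε
  refine ⟨fun i ↦ ∑ x : s, g i x • ψ x, ?_, ?_⟩
  · have hswap : ∑ i, Φ (v i) (∑ x : s, g i x • ψ x) = ∑ x : s, Φ (∑ i, g i x • v i) (ψ x) := by
      simp only [map_sum, map_smul, sum_apply, smul_apply]
      exact Finset.sum_comm
    rw [Set.mem_ofPred_eq, hswap]
    exact Finset.sum_nonneg fun x _ ↦ hΦ _ _ (h x) (hψ x)
  · refine (dist_pi_lt_iff hε).2 fun i ↦ (ContinuousMap.dist_lt_iff hε).2 fun x ↦ ?_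
    have hgi := (pi_norm_lt_iff hε).1 (hg x) i
    rw [dist_comm, dist_eq_norm]
    simpa [ContinuousMap.sum_apply, mul_comm] using hgi

theorem sum_bilinear_cfc_nonneg {B : Type*} [CStarAlgebra B] [PartialOrder B] [StarOrderedRing B]
    (Φ : V →ₗ[ℝ] B →L[ℝ] E) (hΦ : ∀ v x, 0 ≤ v → 0 ≤ x → 0 ≤ Φ v x)
    (v : ι → V) {b : B} (hb : IsSelfAdjoint b) {g : ι → ℝ → ℝ}
    (hg : ∀ i, ContinuousOn (g i) (spectrum ℝ b)) (h : ∀ s ∈ spectrum ℝ b, 0 ≤ ∑ i, g i s • v i) :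
    0 ≤ ∑ i, Φ (v i) (cfc (g i) b) := by
  let cfcCLM : C(spectrum ℝ b, ℝ) →L[ℝ] B := ⟨(cfcHom hb).toLinearMap, cfcHom_continuous hb⟩
  let Ψ : V →ₗ[ℝ] C(spectrum ℝ b, ℝ) →L[ℝ] E := (cfcCLM.precomp E).toLinearMap ∘ₗ Φ
  have hΨ : ∀ v ψ, 0 ≤ v → 0 ≤ ψ → 0 ≤ Ψ v ψ := fun v ψ hv hψ ↦
    hΦ v _ hv ((cfcHom_nonneg_iff hb).2 hψ)
  simp only [fun i ↦ cfc_apply (g i) b hb (hg i)]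
  exact sum_bilinear_nonneg Ψ hΨ v (fun i ↦ ⟨_, (hg i).domRestrict⟩) fun s ↦ h s s.2

end PositiveBilinear

section AbsoluteValue

variable {A B : Type*} [CStarAlgebra A] [PartialOrder A] [StarOrderedRing A]
  [CStarAlgebra B] [PartialOrder B] [StarOrderedRing B]

theorem star_mul_self_le_one {y : A} (hy : ‖y‖ ≤ 1) : star y * y ≤ 1 := by
  rw [← CStarAlgebra.norm_le_one_iff_of_nonneg _ (star_mul_self_nonneg y),
    CStarRing.norm_star_mul_self]
  exact mul_le_one₀ hy (norm_nonneg y) hy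

theorem norm_abs_mul (z x : A) : ‖CFC.abs z * x‖ = ‖z * x‖ := by
  have hstar : star (CFC.abs z * x) * (CFC.abs z * x) = star (z * x) * (z * x) := by
    rw [star_mul, star_mul, (CFC.abs_nonneg z).isSelfAdjoint.star_eq, mul_assoc, mul_assoc,
      ← mul_assoc (CFC.abs z), CFC.abs_mul_abs, mul_assoc]
  rw [← mul_self_inj (norm_nonneg _) (norm_nonneg _), ← CStarRing.norm_star_mul_self, hstar,
    CStarRing.norm_star_mul_self]

theorem exists_regularized_inverse {h : A} (hh : 0 ≤ h) {ε : ℝ} (hε : 0 < ε) :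
    ∃ k : A, IsSelfAdjoint k ∧ ‖h * k‖ ≤ 1 ∧ IsSelfAdjoint (k * (h * h)) ∧
      h ≤ k * (h * h) + algebraMap ℝ A ε := by
  have hspec : ∀ t ∈ spectrum ℝ h, 0 ≤ t := fun _ ht ↦ spectrum_nonneg_of_nonneg hh ht
  have hinv : ContinuousOn (fun t : ℝ ↦ (t + ε)⁻¹) (spectrum ℝ h) :=
    ContinuousOn.inv₀ (by fun_prop) fun t ht ↦ (add_pos_of_nonneg_of_pos (hspec t ht) hε).ne'
  have hcont : ContinuousOn (fun t : ℝ ↦ (t + ε)⁻¹ * (t * t)) (spectrum ℝ h) :=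
    hinv.mul (by fun_prop)
  have hhk : h * cfc (fun t : ℝ ↦ (t + ε)⁻¹) h = cfc (fun t : ℝ ↦ t * (t + ε)⁻¹) h := by
    rw [cfc_mul (fun t : ℝ ↦ t) (fun t ↦ (t + ε)⁻¹) h, cfc_id' ℝ h]
  have hkhh : cfc (fun t : ℝ ↦ (t + ε)⁻¹) h * (h * h) =
      cfc (fun t : ℝ ↦ (t + ε)⁻¹ * (t * t)) h := by
    rw [cfc_mul (fun t : ℝ ↦ (t + ε)⁻¹) (fun t ↦ t * t) h hinv,
      cfc_mul (fun t : ℝ ↦ t) (fun t ↦ t) h, cfc_id' ℝ h]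
  refine ⟨cfc (fun t : ℝ ↦ (t + ε)⁻¹) h, cfc_predicate _ h, ?_, hkhh ▸ cfc_predicate _ h, ?_⟩
  · rw [hhk]
    refine norm_cfc_le zero_le_one fun t ht ↦ ?_
    have ht0 := hspec t ht
    rw [Real.norm_of_nonneg (by positivity)]
    exact mul_inv_le_one_of_le₀ (le_add_of_nonneg_right hε.le) (by positivity)
  · calc h = cfc (fun t : ℝ ↦ t) h := (cfc_id' ℝ h).symm
      _ ≤ cfc (fun t : ℝ ↦ (t + ε)⁻¹ * (t * t) + ε) h := by
        refine cfc_mono (fun t ht ↦ ?_) (by fun_prop) (hcont.add continuousOn_const)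
        have ht0 := hspec t ht
        field_simp
        nlinarith [mul_nonneg ht0 hε.le]
      _ = cfc (fun t : ℝ ↦ (t + ε)⁻¹) h * (h * h) + algebraMap ℝ A ε := by
        rw [cfc_add_const ε _ h hcont, hkhh]

theorem exists_contraction_abs_le (z : A) {ε : ℝ} (hε : 0 < ε) :
    ∃ y : A, ‖y‖ ≤ 1 ∧ IsSelfAdjoint (star y * z) ∧
      CFC.abs z ≤ star y * z + algebraMap ℝ A ε := by
  obtain ⟨k, hk, hnorm, hsa, hle⟩ := exists_regularized_inverse (CFC.abs_nonneg z) hε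
  have hyz : star (z * k) * z = k * (CFC.abs z * CFC.abs z) := by
    rw [CFC.abs_mul_abs, star_mul, hk.star_eq, mul_assoc]
  refine ⟨z * k, ?_, hyz ▸ hsa, hyz ▸ hle⟩
  rwa [← norm_abs_mul]

theorem map_abs_le (τ : A →ₚ[ℂ] B) {z : A} {c : B}
    (h : ∀ y : A, ‖y‖ ≤ 1 → τ (star y * z) + τ (star z * y) ≤ c + c) : τ (CFC.abs z) ≤ c := by
  have happrox : ∀ ε : ℝ, 0 < ε → τ (CFC.abs z) ≤ c + ε • τ 1 := fun ε hε ↦ by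
    obtain ⟨y, hy, hsa, habs⟩ := exists_contraction_abs_le z hε
    have hadj : star z * y = star y * z := by rw [← hsa.star_eq, star_mul, star_star]
    have hdouble : (2 : ℝ) • τ (star y * z) ≤ (2 : ℝ) • c := by
      simpa only [two_smul, hadj] using h y hy
    calc τ (CFC.abs z) ≤ τ (star y * z + algebraMap ℝ A ε) := OrderHomClass.mono τ habs
      _ = τ (star y * z) + ε • τ 1 := by
        rw [map_add, Algebra.algebraMap_eq_smul_one, LinearMapClass.map_smul_of_tower]
      _ ≤ c + ε • τ 1 := by gcongr; exact le_of_smul_le_smul_left hdouble two_pos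
  have hlim : Filter.Tendsto (fun ε : ℝ ↦ c + ε • τ 1) (nhdsWithin 0 (Set.Ioi 0)) (nhds c) := by
    have hcont : Continuous fun ε : ℝ ↦ c + ε • τ 1 := by fun_prop
    simpa using (hcont.tendsto 0).mono_left nhdsWithin_le_nhds
  exact ge_of_tendsto hlim (Filter.eventually_of_mem self_mem_nhdsWithin happrox)

end AbsoluteValue

section PositiveTrace

variable {A E : Type*} [CStarAlgebra A] [PartialOrder A] [StarOrderedRing A]
  [AddCommGroup E] [PartialOrder E] [Module ℂ E] {τ : A →ₚ[ℂ] E}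

theorem trace_mul_nonneg (hτ : ∀ x y, τ (x * y) = τ (y * x)) {a b : A} (ha : 0 ≤ a)
    (hb : 0 ≤ b) : 0 ≤ τ (a * b) := by
  have hsqrt : τ (a * b) = τ (star (CFC.sqrt a) * b * CFC.sqrt a) := by
    rw [hτ _ (CFC.sqrt a), (CFC.sqrt_nonneg a).isSelfAdjoint.star_eq, ← mul_assoc,
      CFC.sqrt_mul_sqrt_self a ha]
  exact hsqrt ▸ map_nonneg τ (star_left_conjugate_nonneg hb _)

variable [IsOrderedAddMonoid E]

theorem trace_mul_le_of_le_one (hτ : ∀ x y, τ (x * y) = τ (y * x)) {x p : A} (hx : x ≤ 1)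
    (hp : 0 ≤ p) : τ (x * p) ≤ τ p := by
  simpa only [sub_mul, one_mul, map_sub, sub_nonneg] using trace_mul_nonneg hτ (sub_nonneg.2 hx) hp

theorem trace_conj_add_trace_star_mul_self_mul_le (hτ : ∀ x y, τ (x * y) = τ (y * x))
    {y p q : A} (hy : ‖y‖ ≤ 1) {c : ℝ} (hp : 0 ≤ p + algebraMap ℝ A c)
    (hq : 0 ≤ q - algebraMap ℝ A c) :
    τ (star y * p * y) + τ (star y * y * q) ≤ τ p + τ q := by
  have hyy : y * star y ≤ 1 := by
    simpa only [star_star] using star_mul_self_le_one ((norm_star y).trans_le hy)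
  have hcancel : τ (y * star y * algebraMap ℝ A c) = τ (star y * y * algebraMap ℝ A c) := by
    rw [mul_assoc, hτ y, mul_assoc, Algebra.commutes, ← mul_assoc]
  calc τ (star y * p * y) + τ (star y * y * q)
    _ = τ (y * star y * (p + algebraMap ℝ A c)) + τ (star y * y * (q - algebraMap ℝ A c)) := by
      rw [mul_add, mul_sub, map_add, map_sub, hcancel, hτ (star y * p), ← mul_assoc]
      abel
    _ ≤ τ (p + algebraMap ℝ A c) + τ (q - algebraMap ℝ A c) :=
      add_le_add (trace_mul_le_of_le_one hτ hyy hp)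
        (trace_mul_le_of_le_one hτ (star_mul_self_le_one hy) hq)
    _ = τ p + τ q := by rw [← map_add, ← map_add, add_add_sub_cancel]

theorem trace_star_mul_add_trace_star_mul_le (hτ : ∀ x y, τ (x * y) = τ (y * x)) {a b : A}
    (ha : 0 ≤ a) (hb : 0 ≤ b) (y : A) :
    τ (star y * (a * b)) + τ (star (a * b) * y) ≤ τ (a * b) + τ (star y * a * y * b) := by
  have hpos := trace_mul_nonneg hτ (star_left_conjugate_nonneg ha (1 - y)) hb
  have hadj : τ (star (a * b) * y) = τ (a * y * b) := by
    rw [star_mul, hb.isSelfAdjoint.star_eq, ha.isSelfAdjoint.star_eq, mul_assoc, hτ]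
  have hexpand : star (1 - y) * a * (1 - y) * b =
      a * b + star y * a * y * b - (star y * (a * b) + a * y * b) := by
    rw [star_sub, star_one]
    noncomm_ring
  rw [hexpand, map_sub, map_add, map_add, sub_nonneg] at hpos
  rwa [hadj]

end PositiveTrace

section FenchelYoung

theorem exists_add_nonneg_sub_nonneg {α β : Type*} [Nonempty α] [Nonempty β] {f : α → ℝ}
    {g : β → ℝ} (h : ∀ x y, 0 ≤ f x + g y) : ∃ c, (∀ x, 0 ≤ f x + c) ∧ ∀ y, 0 ≤ g y - c := by
  obtain ⟨c, hf, hg⟩ := exists_between_of_forall_le (Set.range_nonempty (-f))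
    (Set.range_nonempty g) <| by
      rintro _ ⟨x, rfl⟩ _ ⟨y, rfl⟩
      exact neg_le_iff_add_nonneg'.2 (h x y)
  exact ⟨c, fun x ↦ neg_le_iff_add_nonneg'.1 (hf (Set.mem_range_self x)),
    fun y ↦ sub_nonneg.2 (hg (Set.mem_range_self y))⟩

variable {A B : Type*} [CStarAlgebra A] [PartialOrder A] [StarOrderedRing A]
  [CStarAlgebra B] [PartialOrder B] [StarOrderedRing B] {τ : A →ₚ[ℂ] B} {a b : A} {F G : ℝ → ℝ}

theorem trace_conj_mul_le_trace_conj_cfc (hτ : ∀ x y, τ (x * y) = τ (y * x))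
    (ha : IsSelfAdjoint a) (hb : IsSelfAdjoint b)
    (hF : ContinuousOn F (spectrum ℝ a)) (hG : ContinuousOn G (spectrum ℝ b))
    (hFG : ∀ s ∈ spectrum ℝ b, ∀ t ∈ spectrum ℝ a, s * t ≤ F t + G s) (y : A) :
    τ (star y * a * y * b) ≤ τ (star y * cfc F a * y) + τ (star y * y * cfc G b) := by
  let T : A →L[ℝ] B := ContinuousLinearMap.restrictScalars ℝ ⟨τ.toLinearMap, map_continuous τ⟩
  let Φ : A →L[ℝ] A →L[ℝ] B := ContinuousLinearMap.compL ℝ A A B T ∘L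
    ContinuousLinearMap.mul ℝ A ∘L ContinuousLinearMap.mulLeftRight ℝ A (star y) y
  have hΦ : ∀ x p, Φ x p = τ (star y * x * y * p) := fun _ _ ↦ rfl
  have hΦ_nonneg : ∀ x p, 0 ≤ x → 0 ≤ p → 0 ≤ Φ x p := fun x p hx hp ↦
    trace_mul_nonneg hτ (star_left_conjugate_nonneg hx y) hp
  have hslice : ∀ s ∈ spectrum ℝ b, s • a ≤ cfc F a + algebraMap ℝ A (G s) := fun s hs ↦ by
    rw [← cfc_const_mul_id s a, ← cfc_add_const (G s) F a]
    exact cfc_mono (hFG s hs)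
  have hsum : 0 ≤ Φ (cfc F a) 1 + Φ 1 (cfc G b) + Φ (-a) b := by
    have := sum_bilinear_cfc_nonneg Φ.toLinearMap hΦ_nonneg ![cfc F a, 1, -a] hb
      (g := ![fun _ ↦ 1, G, id])
      (by simpa [Fin.forall_fin_succ] using ⟨continuousOn_const, hG, continuousOn_id⟩)
      (fun s hs ↦ by
        simpa [Fin.sum_univ_three, Algebra.algebraMap_eq_smul_one] using hslice s hs)
    simpa [Fin.sum_univ_three, cfc_const_one ℝ b, cfc_id ℝ b] using this
  simpa [hΦ] using hsum

theorem trace_conj_mul_le_trace_cfc (hτ : ∀ x y, τ (x * y) = τ (y * x))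
    (ha : 0 ≤ a) (hb : 0 ≤ b)
    (hF : ContinuousOn F (spectrum ℝ a)) (hG : ContinuousOn G (spectrum ℝ b))
    (hFG : ∀ s ∈ spectrum ℝ b, ∀ t ∈ spectrum ℝ a, s * t ≤ F t + G s) {y : A} (hy : ‖y‖ ≤ 1) :
    τ (star y * a * y * b) ≤ τ (cfc F a) + τ (cfc G b) := by
  cases subsingleton_or_nontrivial A
  · simp [Subsingleton.elim _ (0 : A)]
  have := (ContinuousFunctionalCalculus.spectrum_nonempty (R := ℝ) a ha.isSelfAdjoint).to_subtype
  have := (ContinuousFunctionalCalculus.spectrum_nonempty (R := ℝ) b hb.isSelfAdjoint).to_subtype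
  have hFG_nonneg (t : spectrum ℝ a) (s : spectrum ℝ b) : 0 ≤ F t + G s :=
    (mul_nonneg (spectrum_nonneg_of_nonneg hb s.2) (spectrum_nonneg_of_nonneg ha t.2)).trans
      (hFG s s.2 t t.2)
  obtain ⟨c, hFc, hGc⟩ := exists_add_nonneg_sub_nonneg hFG_nonneg
  have hFa : 0 ≤ cfc F a + algebraMap ℝ A c := by
    rw [← cfc_add_const c F a]
    exact cfc_nonneg fun t ht ↦ hFc ⟨t, ht⟩
  have hGb : 0 ≤ cfc G b - algebraMap ℝ A c := by
    rw [← cfc_const c b, ← cfc_sub G _ b]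
    exact cfc_nonneg fun s hs ↦ hGc ⟨s, hs⟩
  exact (trace_conj_mul_le_trace_conj_cfc hτ ha.isSelfAdjoint hb.isSelfAdjoint hF hG hFG y).trans
    (trace_conj_add_trace_star_mul_self_mul_le hτ hy hFa hGb)

theorem tracial_fenchel_young_general (hτ : ∀ x y, τ (x * y) = τ (y * x))
    (ha : 0 ≤ a) (hb : 0 ≤ b)
    (hF : ContinuousOn F (spectrum ℝ a)) (hG : ContinuousOn G (spectrum ℝ b))
    (hFG : ∀ s ∈ spectrum ℝ b, ∀ t ∈ spectrum ℝ a, s * t ≤ F t + G s) :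
    τ (CStarAbs (a * b)) ≤ τ (cfc F a) + τ (cfc G b) := by
  have hab : τ (a * b) ≤ τ (cfc F a) + τ (cfc G b) := by
    simpa using trace_conj_mul_le_trace_cfc hτ ha hb hF hG hFG (y := 1)
      ((CStarAlgebra.norm_le_one_iff_of_nonneg (1 : A) zero_le_one).2 le_rfl)
  exact map_abs_le τ fun y hy ↦ (trace_star_mul_add_trace_star_mul_le hτ ha hb y).trans
    (add_le_add hab (trace_conj_mul_le_trace_cfc hτ ha hb hF hG hFG hy))

end FenchelYoung

/-- **A tracial Fenchel–Young inequality in a C*-algebra.** -/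
theorem tracial_fenchel_young {A : Type*} [CStarAlgebra A] [PartialOrder A] [StarOrderedRing A]
    (τ : A →ₗ[ℂ] ℂ) (hτ1 : τ 1 = 1)
    (hτpos : ∀ a : A, 0 ≤ a → 0 ≤ τ a)
    (hτtr : ∀ x y : A, τ (x * y) = τ (y * x))
    (F G : ℝ → ℝ) (hF : Continuous F) (hG : Continuous G)
    (hFG : ∀ s t : ℝ, 0 ≤ s → 0 ≤ t → s * t ≤ F t + G s)
    (a b : A) (ha : 0 ≤ a) (hb : 0 ≤ b) :
    τ (CStarAbs (a * b)) ≤ τ (cfc F a) + τ (cfc G b) :=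
  tracial_fenchel_young_general (τ := .mk₀ τ hτpos) hτtr ha hb hF.continuousOn hG.continuousOn
    fun _ hs _ ht ↦ hFG _ _ (spectrum_nonneg_of_nonneg hb hs) (spectrum_nonneg_of_nonneg ha ht)
end

section
/- Let p, q be positive real numbers with 1/p + 1/q = 1, and let A, B be positive semidefinite n×n complex matrices. Then tr(|AB|) ≤ p⁻¹ tr(Aᵖ) + q⁻¹ tr(B^q), and equality holds if and only if B^q = Aᵖ. -/
open scoped ComplexOrder

/-- The absolute value `|Z| = (Zᴴ Z)^(1/2)` of a square complex matrix. -/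
noncomputable def matAbs {n : ℕ} (Z : Matrix (Fin n) (Fin n) ℂ) : Matrix (Fin n) (Fin n) ℂ :=
  (Matrix.posSemidef_conjTranspose_mul_self Z).1.cfc Real.sqrt

/-- Real powers of a positive semidefinite (in particular, Hermitian) matrix, obtained by
applying `t ↦ t ^ r` to the eigenvalues; junk value `0` on non-Hermitian matrices. -/
noncomputable def matRpow {n : ℕ} (A : Matrix (Fin n) (Fin n) ℂ) (r : ℝ) :
    Matrix (Fin n) (Fin n) ℂ :=
  if hA : A.IsHermitian then hA.cfc (fun t => t ^ r) else 0

/-!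
Polar decomposition writes `|AB| = W A B` with `W` unitary. For unitary `V` and `W`, eigenbases of
`A` and `B` turn `tr (W A V B)` into `∑ aᵢ bⱼ conj(Xᵢⱼ) Yᵢⱼ`, where `aᵢ` and `bⱼ` are the
eigenvalues and `X`, `Y` are unitary. Its modulus is therefore at most `∑ aᵢ bⱼ Mᵢⱼ`, where
`Mᵢⱼ = (|Xᵢⱼ|² + |Yᵢⱼ|²) / 2`. Since `M` is doubly stochastic, applying the scalar Young inequality
to each `aᵢ bⱼ` bounds this sum by `∑ aᵢᵖ / p + ∑ bⱼ^q / q`. Equality forces `aᵢᵖ = bⱼ^q` wherever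
`Yᵢⱼ ≠ 0`, which says that `Aᵖ V = V B^q`; take `V = 1`. Conversely, `B^q = Aᵖ` gives `A B = Aᵖ`.
-/

open Matrix
open scoped MatrixOrder

section PolarDecomposition

variable {𝕜 E V : Type*} [RCLike 𝕜] [AddCommGroup E] [Module 𝕜 E]
  [NormedAddCommGroup V] [InnerProductSpace 𝕜 V] [FiniteDimensional 𝕜 V]

lemma exists_linearIsometry_apply_eq_of_norm_eq {S T : E →ₗ[𝕜] V} (h : ∀ x, ‖S x‖ = ‖T x‖) :
    ∃ u : V →ₗᵢ[𝕜] V, ∀ x, u (S x) = T x := by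
  obtain ⟨g, hg⟩ := S.rangeRestrict.exists_rightInverse_of_surjective S.range_rangeRestrict
  have hSg (y : S.range) : S (g y) = y := congrArg Subtype.val (LinearMap.congr_fun hg y)
  let u₀ : S.range →ₗᵢ[𝕜] V :=
    ⟨T ∘ₗ g, fun y ↦ by rw [LinearMap.comp_apply, ← h, hSg, Submodule.coe_norm]⟩
  refine ⟨u₀.extend, fun x ↦ ?_⟩
  have hker : T (g (S.rangeRestrict x) - x) = 0 := by
    rw [← norm_eq_zero, ← h, map_sub, hSg, LinearMap.codRestrict_apply, sub_self, norm_zero]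
  rw [map_sub, sub_eq_zero] at hker
  rw [← hker]
  exact u₀.extend_apply (S.rangeRestrict x)

variable {m n : Type*} [Fintype m]

lemma norm_toEuclideanLin_eq_of_conjTranspose_mul_self_eq [Fintype n] [DecidableEq n]
    {S T : Matrix m n 𝕜} (h : Sᴴ * S = Tᴴ * T) (x : EuclideanSpace 𝕜 n) :
    ‖toEuclideanLin S x‖ = ‖toEuclideanLin T x‖ := by
  have inner_self (R : Matrix m n 𝕜) :
      inner 𝕜 (toEuclideanLin R x) (toEuclideanLin R x) = star x.ofLp ⬝ᵥ (Rᴴ * R) *ᵥ x.ofLp := by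
    rw [EuclideanSpace.inner_eq_star_dotProduct, toLpLin_apply, WithLp.ofLp_toLp, star_mulVec,
      dotProduct_comm, ← dotProduct_mulVec, mulVec_mulVec]
  rw [norm_eq_sqrt_re_inner (𝕜 := 𝕜), norm_eq_sqrt_re_inner (𝕜 := 𝕜), inner_self, inner_self, h]

theorem exists_mem_unitaryGroup_mul_eq_of_conjTranspose_mul_self_eq [DecidableEq m] [Finite n]
    {S T : Matrix m n 𝕜} (h : Sᴴ * S = Tᴴ * T) : ∃ U ∈ unitaryGroup m 𝕜, U * S = T := by
  classical
  cases nonempty_fintype n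
  obtain ⟨u, hu⟩ := exists_linearIsometry_apply_eq_of_norm_eq
    (norm_toEuclideanLin_eq_of_conjTranspose_mul_self_eq h)
  obtain ⟨U, hU⟩ := toEuclideanLin.surjective u.toLinearMap
  refine ⟨U, mem_unitaryGroup_iff'.2 (toEuclideanLin.injective ?_), toEuclideanLin.injective ?_⟩
  · rw [toLpLin_mul_same, star_eq_conjTranspose, toEuclideanLin_conjTranspose_eq_adjoint, hU,
      toLpLin_one]
    exact u.adjoint_comp_self'
  · rw [toLpLin_mul_same, hU]
    exact LinearMap.ext hu

lemma exists_mem_unitaryGroup_mul_eq_abs [DecidableEq m] (Z : Matrix m m 𝕜) :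
    ∃ U ∈ unitaryGroup m 𝕜, U * Z = CFC.abs Z := by
  refine exists_mem_unitaryGroup_mul_eq_of_conjTranspose_mul_self_eq ?_
  rw [(CFC.abs_nonneg Z).posSemidef.1.eq, CFC.abs_mul_abs, star_eq_conjTranspose]

end PolarDecomposition

section DoublyStochastic

variable {ι : Type*} [Fintype ι] [DecidableEq ι]

lemma sum_sum_add_mul_of_mem_doublyStochastic {R : Type*} [CommSemiring R] [PartialOrder R]
    [IsOrderedRing R] {M : Matrix ι ι R} (hM : M ∈ doublyStochastic R ι) (c d : ι → R) :
    ∑ i, ∑ j, (c i + d j) * M i j = ∑ i, c i + ∑ j, d j := by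
  simp only [add_mul, Finset.sum_add_distrib]
  rw [Finset.sum_comm (f := fun i j ↦ d j * M i j)]
  simp only [← Finset.mul_sum, sum_row_of_mem_doublyStochastic hM,
    sum_col_of_mem_doublyStochastic hM, mul_one]

variable {M : Matrix ι ι ℝ} (hM : M ∈ doublyStochastic ℝ ι) {p q : ℝ} (hpq : p.HolderConjugate q)
  {a b : ι → ℝ} (ha : ∀ i, 0 ≤ a i) (hb : ∀ j, 0 ≤ b j)
include hM hpq ha hb

lemma sum_sum_mul_mul_le_of_mem_doublyStochastic :
    ∑ i, ∑ j, a i * b j * M i j ≤ ∑ i, a i ^ p / p + ∑ j, b j ^ q / q := by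
  rw [← sum_sum_add_mul_of_mem_doublyStochastic hM]
  gcongr
  · exact nonneg_of_mem_doublyStochastic hM
  · exact Real.young_inequality_of_nonneg (ha _) (hb _) hpq

lemma rpow_eq_rpow_of_sum_sum_mul_mul_eq
    (h : ∑ i, ∑ j, a i * b j * M i j = ∑ i, a i ^ p / p + ∑ j, b j ^ q / q)
    {i j : ι} (hij : M i j ≠ 0) : a i ^ p = b j ^ q := by
  have hterm (i j : ι) : a i * b j * M i j ≤ (a i ^ p / p + b j ^ q / q) * M i j :=
    mul_le_mul_of_nonneg_right (Real.young_inequality_of_nonneg (ha i) (hb j) hpq)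
      (nonneg_of_mem_doublyStochastic hM)
  rw [← sum_sum_add_mul_of_mem_doublyStochastic hM,
    Finset.sum_eq_sum_iff_of_le fun i _ ↦ Finset.sum_le_sum fun j _ ↦ hterm i j] at h
  have hrow := h i (Finset.mem_univ i)
  rw [Finset.sum_eq_sum_iff_of_le fun j _ ↦ hterm i j] at hrow
  exact (Real.young_inequality_eq_iff_of_nonneg (ha i) (hb j) hpq).1
    (mul_right_cancel₀ hij (hrow j (Finset.mem_univ j)))

end DoublyStochastic

section Trace

variable {m n ι 𝕜 : Type*} [RCLike 𝕜]

/-- The average of the entrywise squared moduli `|Xᵢⱼ|²` and `|Yᵢⱼ|²`, which bounds `|Xᵢⱼ| |Yᵢⱼ|`;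
it is doubly stochastic when `X` and `Y` are unitary. -/
noncomputable def meanNormSq (X Y : Matrix m n 𝕜) : Matrix m n ℝ :=
  midpoint ℝ (X.map (‖·‖ ^ 2)) (Y.map (‖·‖ ^ 2))

lemma meanNormSq_apply (X Y : Matrix m n 𝕜) (i : m) (j : n) :
    meanNormSq X Y i j = (‖X i j‖ ^ 2 + ‖Y i j‖ ^ 2) / 2 := by
  simp [meanNormSq, midpoint_eq_smul_add, inv_mul_eq_div]

variable [Fintype ι] [DecidableEq ι]

lemma map_norm_sq_mem_doublyStochastic_of_mem_unitaryGroup {U : Matrix ι ι 𝕜}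
    (hU : U ∈ unitaryGroup ι 𝕜) :
    U.map (‖·‖ ^ 2) ∈ doublyStochastic ℝ ι := by
  have sum_row {V : Matrix ι ι 𝕜} (hV : V ∈ unitaryGroup ι 𝕜) (i : ι) : ∑ j, ‖V i j‖ ^ 2 = 1 := by
    have hVi := congrFun₂ (mem_unitaryGroup_iff.1 hV) i i
    simp only [mul_apply, star_apply, RCLike.star_def, RCLike.mul_conj, one_apply_eq] at hVi
    exact_mod_cast hVi
  refine mem_doublyStochastic_iff_sum.2 ⟨fun i j ↦ sq_nonneg _, sum_row hU, fun j ↦ ?_⟩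
  simpa [star_apply] using sum_row (Unitary.star_mem hU) j

lemma meanNormSq_mem_doublyStochastic {X Y : Matrix ι ι 𝕜} (hX : X ∈ unitaryGroup ι 𝕜)
    (hY : Y ∈ unitaryGroup ι 𝕜) : meanNormSq X Y ∈ doublyStochastic ℝ ι :=
  convex_doublyStochastic.midpoint_mem
    (map_norm_sq_mem_doublyStochastic_of_mem_unitaryGroup hX)
    (map_norm_sq_mem_doublyStochastic_of_mem_unitaryGroup hY)

variable [Fintype m] [DecidableEq m] [Fintype n] [DecidableEq n]

lemma trace_conjTranspose_mul_diagonal_mul_mul_diagonal {R : Type*} [CommSemiring R] [StarRing R]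
    (X Y : Matrix m n R) (a : m → R) (b : n → R) :
    (Xᴴ * diagonal a * Y * diagonal b).trace = ∑ i, ∑ j, a i * b j * (star (X i j) * Y i j) := by
  rw [trace, Finset.sum_comm]
  refine Finset.sum_congr rfl fun j _ ↦ ?_
  rw [diag_apply, mul_diagonal, mul_apply, Finset.sum_mul]
  refine Finset.sum_congr rfl fun i _ ↦ ?_
  rw [mul_diagonal, conjTranspose_apply]
  ring

lemma norm_trace_conjTranspose_mul_diagonal_le (X Y : Matrix m n 𝕜) {a : m → ℝ} {b : n → ℝ}
    (ha : ∀ i, 0 ≤ a i) (hb : ∀ j, 0 ≤ b j) :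
    ‖(Xᴴ * diagonal (fun i ↦ (a i : 𝕜)) * Y * diagonal (fun j ↦ (b j : 𝕜))).trace‖ ≤
      ∑ i, ∑ j, a i * b j * meanNormSq X Y i j := by
  rw [trace_conjTranspose_mul_diagonal_mul_mul_diagonal]
  refine norm_sum_le_of_le _ fun i _ ↦ norm_sum_le_of_le _ fun j _ ↦ ?_
  rw [norm_mul, norm_mul, norm_mul, norm_star, RCLike.norm_ofReal, RCLike.norm_ofReal,
    abs_of_nonneg (ha i), abs_of_nonneg (hb j), meanNormSq_apply]
  refine mul_le_mul_of_nonneg_left ?_ (mul_nonneg (ha i) (hb j))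
  linarith [two_mul_le_add_sq ‖X i j‖ ‖Y i j‖]

end Trace

section RealPowers

variable {R : Type*} [Ring R] [StarRing R] [TopologicalSpace R] [IsSemitopologicalRing R]
  [T2Space R] [Algebra ℝ R] [PartialOrder R] [StarOrderedRing R] [NonnegSpectrumClass ℝ R]
  [ContinuousFunctionalCalculus ℝ R IsSelfAdjoint]

lemma cfc_rpow_add_of_pos (a : R) {x y : ℝ} (hx : 0 < x) (hy : 0 < y) :
    a ^ (x + y) = a ^ x * a ^ y := by
  lift x to NNReal using hx.le
  lift y to NNReal using hy.le
  rw [NNReal.coe_pos] at hx hy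
  rw [← NNReal.coe_add, ← CFC.nnrpow_eq_rpow hx, ← CFC.nnrpow_eq_rpow hy,
    ← CFC.nnrpow_eq_rpow (add_pos hx hy), CFC.nnrpow_add hx hy]

lemma mul_eq_rpow_of_rpow_eq_rpow {a b : R} {p q : ℝ} (hpq : p.HolderConjugate q) (ha : 0 ≤ a)
    (hb : 0 ≤ b) (h : b ^ q = a ^ p) : a * b = a ^ p := by
  have hb_eq : b = a ^ (p / q) := calc
    b = (b ^ q) ^ q⁻¹ := by
      rw [CFC.rpow_rpow_of_exponent_nonneg b q q⁻¹ hpq.symm.nonneg hpq.symm.inv_nonneg hb,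
        mul_inv_cancel₀ hpq.symm.ne_zero, CFC.rpow_one b hb]
    _ = a ^ (p / q) := by
      rw [h, CFC.rpow_rpow_of_exponent_nonneg a p q⁻¹ hpq.nonneg hpq.symm.inv_nonneg ha,
        div_eq_mul_inv]
  calc a * b = a ^ (1 : ℝ) * a ^ (p / q) := by rw [CFC.rpow_one a ha, ← hb_eq]
    _ = a ^ (1 + p / q) := (cfc_rpow_add_of_pos a one_pos (div_pos hpq.pos hpq.symm.pos)).symm
    _ = a ^ p := by rw [hpq.div_conj_eq_sub_one, add_sub_cancel]

end RealPowers

section Eigenbases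

variable {ι 𝕜 : Type*} [Fintype ι] [DecidableEq ι] [RCLike 𝕜] {A B : Matrix ι ι 𝕜}

lemma cfc_eq_eigenvectorUnitary_mul_diagonal_mul (hA : A.IsHermitian) (f : ℝ → ℝ) :
    cfc f A = hA.eigenvectorUnitary * diagonal (fun i ↦ (f (hA.eigenvalues i) : 𝕜)) *
      (hA.eigenvectorUnitary : Matrix ι ι 𝕜)ᴴ :=
  hA.cfc_eq f

lemma eq_eigenvectorUnitary_mul_diagonal_mul (hA : A.IsHermitian) :
    A = hA.eigenvectorUnitary * diagonal (fun i ↦ (hA.eigenvalues i : 𝕜)) *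
      (hA.eigenvectorUnitary : Matrix ι ι 𝕜)ᴴ :=
  hA.spectral_theorem

lemma trace_cfc_eq_sum_eigenvalues (hA : A.IsHermitian) (f : ℝ → ℝ) :
    (cfc f A).trace = ((∑ i, f (hA.eigenvalues i) : ℝ) : 𝕜) := by
  rw [hA.cfc_eq f, IsHermitian.cfc, Unitary.conjStarAlgAut_apply, trace_mul_cycle,
    Unitary.coe_star_mul_self, one_mul, trace_diagonal, RCLike.ofReal_sum]
  rfl

/-- The matrix of `V` from the eigenbasis of `B` to the eigenbasis of `A`: its entries are
`⟪eᵢ, V fⱼ⟫` for the eigenvectors `eᵢ` of `A` and `fⱼ` of `B`. -/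
noncomputable def eigenbasisMatrix (hA : A.IsHermitian) (hB : B.IsHermitian)
    (V : Matrix ι ι 𝕜) : Matrix ι ι 𝕜 :=
  (hA.eigenvectorUnitary : Matrix ι ι 𝕜)ᴴ * V * hB.eigenvectorUnitary

variable (hA : A.IsHermitian) (hB : B.IsHermitian)

lemma eigenbasisMatrix_mem_unitaryGroup {V : Matrix ι ι 𝕜} (hV : V ∈ unitaryGroup ι 𝕜) :
    eigenbasisMatrix hA hB V ∈ unitaryGroup ι 𝕜 :=
  mul_mem (mul_mem (Unitary.star_mem hA.eigenvectorUnitary.2) hV) hB.eigenvectorUnitary.2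

lemma eigenbasisMatrix_injective : Function.Injective (eigenbasisMatrix hA hB) := by
  intro V W h
  refine (Unitary.isUnit_coe (U := star hA.eigenvectorUnitary)).mul_left_cancel ?_
  exact (Unitary.isUnit_coe (U := hB.eigenvectorUnitary)).mul_right_cancel h

lemma eigenbasisMatrix_cfc_mul (f : ℝ → ℝ) (V : Matrix ι ι 𝕜) :
    eigenbasisMatrix hA hB (cfc f A * V) =
      diagonal (fun i ↦ (f (hA.eigenvalues i) : 𝕜)) * eigenbasisMatrix hA hB V := by
  simp only [eigenbasisMatrix, cfc_eq_eigenvectorUnitary_mul_diagonal_mul hA,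
    ← star_eq_conjTranspose, ← mul_assoc, Unitary.coe_star_mul_self, one_mul]

lemma eigenbasisMatrix_mul_cfc (f : ℝ → ℝ) (V : Matrix ι ι 𝕜) :
    eigenbasisMatrix hA hB (V * cfc f B) =
      eigenbasisMatrix hA hB V * diagonal (fun j ↦ (f (hB.eigenvalues j) : 𝕜)) := by
  simp only [eigenbasisMatrix, cfc_eq_eigenvectorUnitary_mul_diagonal_mul hB,
    ← star_eq_conjTranspose, mul_assoc, Unitary.coe_star_mul_self, mul_one]

lemma cfc_mul_eq_mul_cfc_of_eigenbasisMatrix {f g : ℝ → ℝ} {V : Matrix ι ι 𝕜}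
    (h : ∀ i j, eigenbasisMatrix hA hB V i j ≠ 0 → f (hA.eigenvalues i) = g (hB.eigenvalues j)) :
    cfc f A * V = V * cfc g B := by
  refine eigenbasisMatrix_injective hA hB ?_
  rw [eigenbasisMatrix_cfc_mul, eigenbasisMatrix_mul_cfc]
  ext i j
  rw [diagonal_mul, mul_diagonal, mul_comm]
  obtain hij | hij := eq_or_ne (eigenbasisMatrix hA hB V i j) 0
  · rw [hij, zero_mul, zero_mul]
  · rw [h i j hij]

lemma trace_mul_mul_mul_eq_eigenbasisMatrix (W V : Matrix ι ι 𝕜) :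
    (W * A * V * B).trace = ((eigenbasisMatrix hA hB Wᴴ)ᴴ *
      diagonal (fun i ↦ (hA.eigenvalues i : 𝕜)) * eigenbasisMatrix hA hB V *
        diagonal (fun j ↦ (hB.eigenvalues j : 𝕜))).trace := by
  conv_lhs => rw [eq_eigenvectorUnitary_mul_diagonal_mul hA,
    eq_eigenvectorUnitary_mul_diagonal_mul hB, ← mul_assoc, trace_mul_comm]
  simp only [eigenbasisMatrix, conjTranspose_mul, conjTranspose_conjTranspose, mul_assoc]

lemma meanNormSq_eigenbasisMatrix_mem_doublyStochastic {V W : Matrix ι ι 𝕜}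
    (hV : V ∈ unitaryGroup ι 𝕜) (hW : W ∈ unitaryGroup ι 𝕜) :
    meanNormSq (eigenbasisMatrix hA hB Wᴴ) (eigenbasisMatrix hA hB V) ∈ doublyStochastic ℝ ι :=
  meanNormSq_mem_doublyStochastic
    (eigenbasisMatrix_mem_unitaryGroup hA hB (Unitary.star_mem hW))
    (eigenbasisMatrix_mem_unitaryGroup hA hB hV)

end Eigenbases

section Young

variable {ι 𝕜 : Type*} [Fintype ι] [DecidableEq ι] [RCLike 𝕜] {A B : Matrix ι ι 𝕜}

lemma trace_rpow_eq_sum_eigenvalues (hA : A.PosSemidef) (r : ℝ) :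
    (A ^ r).trace = ((∑ i, hA.1.eigenvalues i ^ r : ℝ) : 𝕜) := by
  rw [CFC.rpow_eq_cfc_real hA.nonneg, trace_cfc_eq_sum_eigenvalues hA.1]

lemma re_trace_rpow_div_eq_sum_eigenvalues (hA : A.PosSemidef) (r : ℝ) :
    RCLike.re (A ^ r).trace / r = ∑ i, hA.1.eigenvalues i ^ r / r := by
  rw [trace_rpow_eq_sum_eigenvalues hA, RCLike.ofReal_re, Finset.sum_div]

variable {p q : ℝ} (hpq : p.HolderConjugate q) (hA : A.PosSemidef) (hB : B.PosSemidef)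
  {V W : Matrix ι ι 𝕜}
include hpq hA hB

theorem norm_trace_mul_mul_mul_le (hV : V ∈ unitaryGroup ι 𝕜) (hW : W ∈ unitaryGroup ι 𝕜) :
    ‖(W * A * V * B).trace‖ ≤ RCLike.re (A ^ p).trace / p + RCLike.re (B ^ q).trace / q := by
  rw [trace_mul_mul_mul_eq_eigenbasisMatrix hA.1 hB.1,
    re_trace_rpow_div_eq_sum_eigenvalues hA, re_trace_rpow_div_eq_sum_eigenvalues hB]
  refine (norm_trace_conjTranspose_mul_diagonal_le _ _ hA.eigenvalues_nonneg
    hB.eigenvalues_nonneg).trans ?_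
  exact sum_sum_mul_mul_le_of_mem_doublyStochastic
    (meanNormSq_eigenbasisMatrix_mem_doublyStochastic hA.1 hB.1 hV hW) hpq
    hA.eigenvalues_nonneg hB.eigenvalues_nonneg

theorem rpow_mul_eq_mul_rpow_of_norm_trace_eq (hV : V ∈ unitaryGroup ι 𝕜)
    (hW : W ∈ unitaryGroup ι 𝕜)
    (h : ‖(W * A * V * B).trace‖ = RCLike.re (A ^ p).trace / p + RCLike.re (B ^ q).trace / q) :
    A ^ p * V = V * B ^ q := by
  have ha := hA.eigenvalues_nonneg
  have hb := hB.eigenvalues_nonneg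
  set X := eigenbasisMatrix hA.1 hB.1 Wᴴ
  set Y := eigenbasisMatrix hA.1 hB.1 V
  have hM : meanNormSq X Y ∈ doublyStochastic ℝ ι :=
    meanNormSq_eigenbasisMatrix_mem_doublyStochastic hA.1 hB.1 hV hW
  rw [trace_mul_mul_mul_eq_eigenbasisMatrix hA.1 hB.1,
    re_trace_rpow_div_eq_sum_eigenvalues hA, re_trace_rpow_div_eq_sum_eigenvalues hB] at h
  have hsum := (sum_sum_mul_mul_le_of_mem_doublyStochastic hM hpq ha hb).antisymm
    (h.ge.trans (norm_trace_conjTranspose_mul_diagonal_le X Y ha hb))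
  rw [CFC.rpow_eq_cfc_real hA.nonneg, CFC.rpow_eq_cfc_real hB.nonneg]
  refine cfc_mul_eq_mul_cfc_of_eigenbasisMatrix hA.1 hB.1 fun i j hij ↦
    rpow_eq_rpow_of_sum_sum_mul_mul_eq hM hpq ha hb hsum ?_
  have : 0 < ‖Y i j‖ := norm_pos_iff.2 hij
  rw [meanNormSq_apply]
  positivity

theorem matrix_tracial_young_general :
    (CFC.abs (A * B)).trace ≤ (p : 𝕜)⁻¹ * (A ^ p).trace + (q : 𝕜)⁻¹ * (B ^ q).trace ∧
      ((CFC.abs (A * B)).trace = (p : 𝕜)⁻¹ * (A ^ p).trace + (q : 𝕜)⁻¹ * (B ^ q).trace ↔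
        B ^ q = A ^ p) := by
  obtain ⟨W, hW, hWAB⟩ := exists_mem_unitaryGroup_mul_eq_abs (A * B)
  have trace_abs : (CFC.abs (A * B)).trace = (‖(W * A * 1 * B).trace‖ : 𝕜) := by
    rw [mul_one, mul_assoc, hWAB,
      RCLike.norm_of_nonneg' (CFC.abs_nonneg (A * B)).posSemidef.trace_nonneg]
  have rhs_eq : (p : 𝕜)⁻¹ * (A ^ p).trace + (q : 𝕜)⁻¹ * (B ^ q).trace =
      ((RCLike.re (A ^ p).trace / p + RCLike.re (B ^ q).trace / q : ℝ) : 𝕜) := by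
    simp only [trace_rpow_eq_sum_eigenvalues hA, trace_rpow_eq_sum_eigenvalues hB, RCLike.ofReal_re]
    push_cast
    ring
  refine ⟨?_, fun h ↦ ?_, fun h ↦ ?_⟩
  · rw [trace_abs, rhs_eq, RCLike.ofReal_le_ofReal]
    exact norm_trace_mul_mul_mul_le hpq hA hB (one_mem _) hW
  · rw [trace_abs, rhs_eq, RCLike.ofReal_inj] at h
    simpa using (rpow_mul_eq_mul_rpow_of_norm_trace_eq hpq hA hB (one_mem _) hW h).symm
  · rw [mul_eq_rpow_of_rpow_eq_rpow hpq hA.nonneg hB.nonneg h, CFC.abs_of_nonneg _ CFC.rpow_nonneg,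
      h, ← add_mul]
    have : (p : 𝕜)⁻¹ + (q : 𝕜)⁻¹ = 1 := by exact_mod_cast hpq.inv_add_inv_eq_one
    rw [this, one_mul]

end Young

section FunctionalCalculus

variable {n : ℕ}

lemma matAbs_eq_abs (Z : Matrix (Fin n) (Fin n) ℂ) : matAbs Z = CFC.abs Z := by
  have hZ := (posSemidef_conjTranspose_mul_self Z).nonneg
  rw [matAbs, ← IsHermitian.cfc_eq, CFC.abs, star_eq_conjTranspose,
    CFC.sqrt_eq_real_sqrt _ hZ, cfcₙ_eq_cfc]

lemma matRpow_eq_rpow {A : Matrix (Fin n) (Fin n) ℂ} (hA : A.PosSemidef) (r : ℝ) :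
    matRpow A r = A ^ r := by
  rw [matRpow, dif_pos hA.1, ← IsHermitian.cfc_eq, CFC.rpow_eq_cfc_real hA.nonneg]

end FunctionalCalculus

/-- **Matrix tracial Young inequality, with its equality case.** -/
theorem matrix_tracial_young {n : ℕ} (p q : ℝ) (hp : 0 < p) (hq : 0 < q)
    (hpq : 1 / p + 1 / q = 1)
    (A B : Matrix (Fin n) (Fin n) ℂ) (hA : A.PosSemidef) (hB : B.PosSemidef) :
    (matAbs (A * B)).trace ≤ (p⁻¹ : ℂ) * (matRpow A p).trace + (q⁻¹ : ℂ) * (matRpow B q).trace ∧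
      ((matAbs (A * B)).trace =
          (p⁻¹ : ℂ) * (matRpow A p).trace + (q⁻¹ : ℂ) * (matRpow B q).trace ↔
        matRpow B q = matRpow A p) := by
  have hconj : p.HolderConjugate q := ⟨by simpa using hpq, hp, hq⟩
  rw [matAbs_eq_abs, matRpow_eq_rpow hA, matRpow_eq_rpow hB]
  exact matrix_tracial_young_general hconj hA hB
end
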